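/- arXiv:1711.09118 — 2 statements merged into one kernel-verified Lean document; each statement's English description precedes it below -/
import Mathlib

section
/- Let Ξ₀ be a holomorphic function on the punctured unit disc B₁* having finite order n ∈ ℤ at 0, and let u : B₁* → ℝ be C² with Δu = 16|Ξ₀|²e^{2u}. Suppose v(z) := u(z) + β·log|z| extends continuously to the unit disc for some β < n+1 (the 'conical' case) or ṽ(z) := u(z) + (n+1)·log|z| + log|log|z|| extends continuously (the 'logarithmic' case, β := n+1). Then: if β < n + 1/2 then ∂v/∂x and ∂v/∂y extend continuously to 0; if β = n + 1/2 then ∂v/∂x and ∂v/∂y are bounded near 0; if n + 1/2 < β < n+1 then ∂v/∂x and ∂v/∂y are O(|z|^{1−2(β−n)}) as z → 0; and in the logarithmic case ∂ṽ/∂x and ∂ṽ/∂y are O(|z|^{-1}(log|z|)^{-2}) as z → 0. -/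
open Complex Real Set Topology Filter Asymptotics

/-- Partial derivative in the `x`-direction of a function on `ℂ ≅ ℝ²`. -/
noncomputable def pdx (f : ℂ → ℝ) (z : ℂ) : ℝ := deriv (fun t : ℝ => f (z + t)) 0

/-- Partial derivative in the `y`-direction. -/
noncomputable def pdy (f : ℂ → ℝ) (z : ℂ) : ℝ := deriv (fun t : ℝ => f (z + t * Complex.I)) 0

/-- The flat Laplacian `Δ = ∂²/∂x² + ∂²/∂y²`. -/
noncomputable def lap (f : ℂ → ℝ) (z : ℂ) : ℝ := pdx (pdx f) z + pdy (pdy f) z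

/-- The punctured open unit disc `B₁* = {0 < |z| < 1}`. -/
def PDisc : Set ℂ := {z : ℂ | 0 < ‖z‖ ∧ ‖z‖ < 1}


open Complex Real Set Topology Filter Asymptotics

/-- `f` is `C²` at `z` with Laplacian equal to `l`. -/
def HL (f : ℂ → ℝ) (z : ℂ) (l : ℝ) : Prop :=
  ContDiffAt ℝ 2 f z ∧
    fderiv ℝ (fderiv ℝ f) z 1 1 + fderiv ℝ (fderiv ℝ f) z Complex.I Complex.I = l

theorem cd_diff {E F : Type*} [NormedAddCommGroup E] [NormedSpace ℝ E] [NormedAddCommGroup F]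
    [NormedSpace ℝ F] {f : E → F} {z : E} (h : ContDiffAt ℝ 2 f z) : DifferentiableAt ℝ f z :=
  h.differentiableAt (by norm_num)

theorem cd_fderiv {E F : Type*} [NormedAddCommGroup E] [NormedSpace ℝ E] [NormedAddCommGroup F]
    [NormedSpace ℝ F] {f : E → F} {z : E} (h : ContDiffAt ℝ 2 f z) :
    DifferentiableAt ℝ (fderiv ℝ f) z := by
  have : ContDiffAt ℝ 1 (fderiv ℝ f) z := h.fderiv_right (by norm_num)
  exact this.differentiableAt (by norm_num)

theorem cd_ev {E F : Type*} [NormedAddCommGroup E] [NormedSpace ℝ E] [NormedAddCommGroup F]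
    [NormedSpace ℝ F] {f : E → F} {z : E} (h : ContDiffAt ℝ 2 f z) :
    ∀ᶠ w in 𝓝 z, ContDiffAt ℝ 2 f w := h.eventually (by simp)

theorem dd_comp {E F : Type*} [NormedAddCommGroup E] [NormedSpace ℝ E] [NormedAddCommGroup F]
    [NormedSpace ℝ F] {g : F → ℝ} {φ : E → F} {z : E} (hg : ContDiffAt ℝ 2 g (φ z))
    (hφ : ContDiffAt ℝ 2 φ z) (e : E) :
    fderiv ℝ (fderiv ℝ (fun w => g (φ w))) z e e =
      fderiv ℝ (fderiv ℝ g) (φ z) (fderiv ℝ φ z e) (fderiv ℝ φ z e) +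
        fderiv ℝ g (φ z) (fderiv ℝ (fderiv ℝ φ) z e e) := by
  have h1 : fderiv ℝ (fun w => g (φ w)) =ᶠ[𝓝 z]
      fun w => (fderiv ℝ g (φ w)).comp (fderiv ℝ φ w) := by
    filter_upwards [cd_ev hφ, hφ.continuousAt.eventually (cd_ev hg)] with w h1 h2
    exact fderiv_comp w (cd_diff h2) (cd_diff h1)
  rw [h1.fderiv_eq]
  have h2 : HasFDerivAt (fun w => fderiv ℝ g (φ w))
      ((fderiv ℝ (fderiv ℝ g) (φ z)).comp (fderiv ℝ φ z)) z :=
    (cd_fderiv hg).hasFDerivAt.comp z (cd_diff hφ).hasFDerivAt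
  have h3 := h2.clm_comp (cd_fderiv hφ).hasFDerivAt
  rw [h3.fderiv]
  simp [add_comm]

theorem HL.cd {f : ℂ → ℝ} {z : ℂ} {l : ℝ} (h : HL f z l) : ContDiffAt ℝ 2 f z := h.1

theorem HL.congr {f g : ℂ → ℝ} {z : ℂ} {l : ℝ} (h : HL f z l) (hfg : g =ᶠ[𝓝 z] f) : HL g z l := by
  refine ⟨h.1.congr_of_eventuallyEq hfg, ?_⟩
  rw [hfg.fderiv.fderiv_eq]; exact h.2

theorem HL.add {f g : ℂ → ℝ} {z : ℂ} {l m : ℝ} (h : HL f z l) (h' : HL g z m) :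
    HL (fun w => f w + g w) z (l + m) := by
  refine ⟨h.1.add h'.1, ?_⟩
  have h1 : fderiv ℝ (fun w => f w + g w) =ᶠ[𝓝 z] fun w => fderiv ℝ f w + fderiv ℝ g w := by
    filter_upwards [cd_ev h.1, cd_ev h'.1] with w h1 h2
    exact fderiv_add (cd_diff h1) (cd_diff h2)
  have h2 : fderiv ℝ (fun w => fderiv ℝ f w + fderiv ℝ g w) z = _ :=
    ((cd_fderiv h.1).hasFDerivAt.add (cd_fderiv h'.1).hasFDerivAt).fderiv
  rw [h1.fderiv_eq, h2]
  rw [← h.2, ← h'.2]; simp; ring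

theorem HL.const_mul {f : ℂ → ℝ} {z : ℂ} {l : ℝ} (h : HL f z l) (c : ℝ) :
    HL (fun w => c * f w) z (c * l) := by
  refine ⟨contDiffAt_const.mul h.1, ?_⟩
  have h1 : fderiv ℝ (fun w => c * f w) =ᶠ[𝓝 z] fun w => c • fderiv ℝ f w := by
    filter_upwards [cd_ev h.1] with w h1
    exact fderiv_const_mul (cd_diff h1) c
  have h2 : fderiv ℝ (fun w => c • fderiv ℝ f w) z = _ :=
    ((cd_fderiv h.1).hasFDerivAt.const_smul c).fderiv
  rw [h1.fderiv_eq, h2]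
  rw [← h.2]; simp; ring

theorem HL.const (c : ℝ) (z : ℂ) : HL (fun _ => c) z 0 := by
  refine ⟨contDiffAt_const, ?_⟩
  have : fderiv ℝ (fun _ : ℂ => c) = fun _ => 0 := by ext; simp
  rw [this]; simp

theorem HL.neg {f : ℂ → ℝ} {z : ℂ} {l : ℝ} (h : HL f z l) :
    HL (fun w => - f w) z (-l) := by
  simpa using h.const_mul (-1)

theorem HL.sub {f g : ℂ → ℝ} {z : ℂ} {l m : ℝ} (h : HL f z l) (h' : HL g z m) :
    HL (fun w => f w - g w) z (l - m) := by
  simpa [sub_eq_add_neg] using h.add h'.neg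

theorem HL.of_eq {f : ℂ → ℝ} {z : ℂ} {l m : ℝ} (h : HL f z l) (e : l = m) : HL f z m := e ▸ h

theorem HL.unique {f : ℂ → ℝ} {z : ℂ} {l m : ℝ} (h : HL f z l) (h' : HL f z m) : l = m :=
  h.2.symm.trans h'.2

theorem harm_dd {F : Type*} [NormedAddCommGroup F] [NormedSpace ℝ F] {f : ℂ → F} {z : ℂ}
    (h : InnerProductSpace.HarmonicAt f z) : ContDiffAt ℝ 2 f z ∧
    fderiv ℝ (fderiv ℝ f) z 1 1 + fderiv ℝ (fderiv ℝ f) z Complex.I Complex.I = 0 := by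
  refine ⟨h.1, ?_⟩
  have := h.2.self_of_nhds
  rw [InnerProductSpace.laplacian_eq_iteratedFDeriv_complexPlane] at this
  simpa [iteratedFDeriv_two_apply] using this

theorem HL.harm {f : ℂ → ℝ} {z : ℂ} (h : InnerProductSpace.HarmonicAt f z) : HL f z 0 := harm_dd h

/-- scalar chain rule -/
theorem HL.comp_real {f : ℂ → ℝ} {z : ℂ} {l : ℝ} (h : HL f z l) {φ : ℝ → ℝ}
    (hφ : ContDiffAt ℝ 2 φ (f z)) :
    HL (fun w => φ (f w)) z (deriv (deriv φ) (f z) *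
      ((fderiv ℝ f z 1) ^ 2 + (fderiv ℝ f z Complex.I) ^ 2) + deriv φ (f z) * l) := by
  refine ⟨hφ.comp z h.1, ?_⟩
  have e1 : ∀ a : ℝ, fderiv ℝ φ (f z) a = a * deriv φ (f z) := by
    intro a
    simp
  have e2 : ∀ a b : ℝ, fderiv ℝ (fderiv ℝ φ) (f z) a b = a * b * deriv (deriv φ) (f z) := by
    intro a b
    have : fderiv ℝ φ = fun x => ContinuousLinearMap.toSpanSingleton ℝ (deriv φ x) := by
      ext x; simp
    have hd : HasFDerivAt (fderiv ℝ φ) (fderiv ℝ (fderiv ℝ φ) (f z)) (f z) :=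
      (cd_fderiv hφ).hasFDerivAt
    have hd2 := hd.clm_apply (hasFDerivAt_const (1:ℝ) (f z))
    have h3 : (fun y => (fderiv ℝ φ y) 1) = deriv φ := by ext; simp
    rw [h3] at hd2
    have h4 : deriv (deriv φ) (f z) = fderiv ℝ (fderiv ℝ φ) (f z) 1 1 := by
      rw [← fderiv_apply_one_eq_deriv, hd2.fderiv]
      simp only [ContinuousLinearMap.comp_zero, zero_add, ContinuousLinearMap.flip_apply]
    have h5 : fderiv ℝ (fderiv ℝ φ) (f z) a b = a * (b * fderiv ℝ (fderiv ℝ φ) (f z) 1 1) := by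
      conv_lhs => rw [show a = a • (1:ℝ) by simp, show b = b • (1:ℝ) by simp]
      rw [map_smul (fderiv ℝ (fderiv ℝ φ) (f z)) a (1:ℝ), smul_apply,
        map_smul (fderiv ℝ (fderiv ℝ φ) (f z) 1) b (1:ℝ)]
      rfl
    rw [h5, h4]; ring
  rw [dd_comp hφ h.1, dd_comp hφ h.1, e1, e1, e2, e2, ← h.2]; ring

theorem HL.comp_conf {f : ℂ → ℝ} {φ : ℂ → ℂ} {z : ℂ} {l : ℝ} (h : HL f (φ z) l)
    (hφ : ContDiffAt ℝ 2 φ z)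
    (h0 : fderiv ℝ (fderiv ℝ φ) z 1 1 + fderiv ℝ (fderiv ℝ φ) z Complex.I Complex.I = 0)
    (h1 : fderiv ℝ φ z Complex.I = Complex.I * fderiv ℝ φ z 1 ∨
      fderiv ℝ φ z Complex.I = - (Complex.I * fderiv ℝ φ z 1)) :
    HL (fun w => f (φ w)) z (‖fderiv ℝ φ z 1‖ ^ 2 * l) := by
  refine ⟨h.1.comp z hφ, ?_⟩
  rw [dd_comp h.1 hφ, dd_comp h.1 hφ, ← h.2]
  have h2 : fderiv ℝ f (φ z) (fderiv ℝ (fderiv ℝ φ) z 1 1) +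
      fderiv ℝ f (φ z) (fderiv ℝ (fderiv ℝ φ) z Complex.I Complex.I) = 0 := by
    rw [← map_add, h0, map_zero]
  set B := fderiv ℝ (fderiv ℝ f) (φ z)
  set c := fderiv ℝ φ z 1
  have h3 : B (fderiv ℝ φ z Complex.I) (fderiv ℝ φ z Complex.I) =
      B (Complex.I * c) (Complex.I * c) := by
    rcases h1 with h1 | h1 <;> rw [h1] <;> simp
  have hs : B 1 Complex.I = B Complex.I 1 := by
    have := h.1.isSymmSndFDerivAt (by simp)
    exact this.eq _ _
  have e1 : ∀ a b : ℝ, B (a + b * Complex.I) (a + b * Complex.I) =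
      a^2 * B 1 1 + a * b * (B 1 Complex.I) + a * b * B Complex.I 1
        + b ^ 2 * B Complex.I Complex.I := by
    intro a b
    have : ((a:ℂ) + b * Complex.I) = a • (1:ℂ) + b • Complex.I := by simp
    rw [this]
    simp only [map_add, map_smul, add_apply, smul_apply,
      smul_eq_mul]
    ring
  have e2 := e1 c.re c.im
  rw [Complex.re_add_im] at e2
  have e3 := e1 (-c.im) (c.re)
  have h4 : ((-c.im : ℝ) : ℂ) + c.re * Complex.I = Complex.I * c := by
      apply Complex.ext <;> simp
  rw [h4] at e3
  have e4 : ‖c‖ ^ 2 = c.re ^ 2 + c.im ^ 2 := by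
    rw [Complex.sq_norm, Complex.normSq_apply]; ring
  rw [h3, e2, e3, e4]
  linear_combination h2

theorem HL.comp_holo {f : ℂ → ℝ} {φ : ℂ → ℂ} {z : ℂ} {l : ℝ} (h : HL f (φ z) l)
    (hφ : AnalyticAt ℂ φ z) :
    HL (fun w => f (φ w)) z (‖deriv φ z‖ ^ 2 * l) := by
  have h1 := harm_dd hφ.harmonicAt
  have hd : HasFDerivAt φ ((fderiv ℂ φ z).restrictScalars ℝ) z :=
    hφ.differentiableAt.hasFDerivAt.restrictScalars ℝ
  have e1 : ∀ v, fderiv ℝ φ z v = v * deriv φ z := by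
    intro v
    rw [hd.fderiv]
    simp
  have := h.comp_conf h1.1 h1.2 (by left; rw [e1, e1]; ring)
  rwa [e1, one_mul] at this

theorem HL.comp_conj {f : ℂ → ℝ} {z : ℂ} {l : ℝ} (h : HL f ((starRingEnd ℂ) z) l) :
    HL (fun w => f ((starRingEnd ℂ) w)) z l := by
  have h0 : ∀ z, HasFDerivAt (fun w : ℂ => (starRingEnd ℂ) w) (Complex.conjCLE : ℂ →L[ℝ] ℂ) z :=
    fun z => Complex.conjCLE.hasFDerivAt
  have h1 : fderiv ℝ (fun w : ℂ => (starRingEnd ℂ) w) = fun _ => (Complex.conjCLE : ℂ →L[ℝ] ℂ) :=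
    funext fun z => (h0 z).fderiv
  have h2 : ContDiffAt ℝ 2 (fun w : ℂ => (starRingEnd ℂ) w) z :=
    Complex.conjCLE.contDiff.contDiffAt
  have := HL.comp_conf (φ := fun w => (starRingEnd ℂ) w) h h2 (by rw [h1]; simp)
    (by rw [h1]; simp)
  rw [h1] at this
  simpa using this

/-- affine isometries -/
theorem HL.comp_aff {f : ℂ → ℝ} {z a c : ℂ} {l : ℝ} (hc : ‖c‖ = 1) (h : HL f (a + c * z) l) :
    HL (fun w => f (a + c * w)) z l := by
  have h1 : HasDerivAt (fun w => a + c * w) c z := by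
    simpa using ((hasDerivAt_id z).const_mul c).const_add a
  have := HL.comp_holo (φ := fun w => a + c * w) h (by fun_prop)
  rw [h1.deriv, hc] at this
  simpa using this

theorem HL.comp_affc {f : ℂ → ℝ} {z a c : ℂ} {l : ℝ} (hc : ‖c‖ = 1)
    (h : HL f (a + c * (starRingEnd ℂ) z) l) :
    HL (fun w => f (a + c * (starRingEnd ℂ) w)) z l :=
  HL.comp_conj (f := fun w => f (a + c * w)) (HL.comp_aff hc h)

/-- The second derivative test. -/
theorem HL.max {f : ℂ → ℝ} {z : ℂ} {l : ℝ} (h : HL f z l) (hm : IsLocalMax f z) : l ≤ 0 := by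
  have key : ∀ e : ℂ, fderiv ℝ (fderiv ℝ f) z e e ≤ 0 := by
    intro e
    by_contra hpos
    push Not at hpos
    have hline : ∀ t : ℝ, HasDerivAt (fun t : ℝ => z + t * e) e t := by
      intro t
      have := ((Complex.ofRealCLM.hasDerivAt (x := t)).mul_const e).const_add z
      simpa using this
    have hcont : Tendsto (fun t : ℝ => z + t * e) (𝓝 0) (𝓝 z) := by
      have := (hline 0).continuousAt.tendsto; simpa using this
    set g : ℝ → ℝ := fun t => f (z + t * e)
    have hg1 : deriv g =ᶠ[𝓝 0] fun t => fderiv ℝ f (z + t * e) e := by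
      filter_upwards [hcont.eventually (cd_ev h.1)] with t ht
      exact ((cd_diff ht).hasFDerivAt.comp_hasDerivAt t (hline t)).deriv
    have hg2 : deriv (deriv g) 0 = fderiv ℝ (fderiv ℝ f) z e e := by
      rw [hg1.deriv_eq]
      have h1 : HasFDerivAt (fderiv ℝ f) (fderiv ℝ (fderiv ℝ f) z) (z + (0:ℝ) * e) := by
        simpa using (cd_fderiv h.1).hasFDerivAt
      have h2 := h1.comp_hasDerivAt (0:ℝ) (hline 0)
      have h3 := h2.clm_apply (hasDerivAt_const (0:ℝ) e)
      simpa using h3.deriv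
    have hmg : IsLocalMax g 0 := by
      have : ∀ᶠ w in 𝓝 z, f w ≤ f z := hm
      have h2 := hcont.eventually this
      filter_upwards [h2] with t ht
      simpa [g] using ht
    have hmin : IsLocalMin g 0 := by
      apply isLocalMin_of_deriv_deriv_pos
      · rw [hg2]; exact hpos
      · exact hmg.deriv_eq_zero
      · have h1 : ContinuousAt f (z + (0:ℝ) * e) := by simpa using h.1.continuousAt
        exact h1.comp (f := fun t : ℝ => z + t * e) (hline 0).continuousAt
    have hc : g =ᶠ[𝓝 0] fun _ => g 0 := by
      filter_upwards [hmg, hmin] with t h1 h2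
      exact le_antisymm h1 h2
    have : deriv (deriv g) 0 = 0 := by
      rw [hc.deriv.deriv_eq]; simp
    rw [hg2] at this
    linarith
  rw [← h.2]
  linarith [key 1, key Complex.I]

open Complex Real Set Topology Filter Asymptotics

theorem HL.log_norm {z p : ℂ} (h : z ≠ p) : HL (fun w => Real.log ‖w - p‖) z 0 := by
  apply HL.harm
  have h1 : AnalyticAt ℂ (fun w => w - p) z := by fun_prop
  exact h1.harmonicAt_log_norm (sub_ne_zero.2 h)

theorem grad_log_norm {z p : ℂ} (h : z ≠ p) :
    (fderiv ℝ (fun w => Real.log ‖w - p‖) z 1) ^ 2 +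
    (fderiv ℝ (fun w => Real.log ‖w - p‖) z Complex.I) ^ 2 = (‖z - p‖ ^ 2)⁻¹ := by
  have e : (fun w : ℂ => Real.log ‖w - p‖) =
      fun w => (1/2) * Real.log ((w - p).re ^ 2 + (w - p).im ^ 2) := by
    ext w
    have : (w - p).re ^ 2 + (w - p).im ^ 2 = ‖w - p‖ ^ 2 := by
      rw [Complex.sq_norm, Complex.normSq_apply]; ring
    rw [this, Real.log_pow]; push_cast; ring
  have hn : (z - p).re ^ 2 + (z - p).im ^ 2 = ‖z - p‖ ^ 2 := by
      rw [Complex.sq_norm, Complex.normSq_apply]; ring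
  have hpos : 0 < ‖z - p‖ ^ 2 := by
    have := norm_pos_iff.2 (sub_ne_zero.2 h); positivity
  have hre : HasFDerivAt (fun w : ℂ => (w - p).re) (Complex.reCLM) z :=
    Complex.reCLM.hasFDerivAt.comp z ((hasFDerivAt_id z).sub_const p)
  have him : HasFDerivAt (fun w : ℂ => (w - p).im) (Complex.imCLM) z :=
    Complex.imCLM.hasFDerivAt.comp z ((hasFDerivAt_id z).sub_const p)
  have h1 := (((hre.pow 2).add (him.pow 2)).log (by simp only [Pi.add_apply]; rw [hn]; exact hpos.ne')).const_mul (1/2)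
  have h2 : fderiv ℝ (fun w : ℂ => (1/2) * Real.log ((w - p).re ^ 2 + (w - p).im ^ 2)) z = _ :=
    h1.fderiv
  rw [e, h2]
  simp
  simp only [Complex.sub_re, Complex.sub_im] at hn
  rw [hn]
  have hN : ‖z - p‖ ≠ 0 := fun h0 => by rw [h0] at hpos; norm_num at hpos
  generalize ‖z - p‖ = N at *
  generalize z.re - p.re = a at *
  generalize z.im - p.im = b at *
  field_simp
  linear_combination hn

theorem HL.rpow_norm {z p : ℂ} (h : z ≠ p) (δ : ℝ) :
    HL (fun w => ‖w - p‖ ^ δ) z (δ ^ 2 * ‖z - p‖ ^ (δ - 2)) := by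
  have h0 := norm_pos_iff.2 (sub_ne_zero.2 h)
  have hφ : ∀ t, HasDerivAt (fun t : ℝ => Real.exp (δ * t)) (δ * Real.exp (δ * t)) t := by
    intro t
    have := ((hasDerivAt_id t).const_mul δ).exp
    simp only [id, mul_one] at this
    rwa [mul_comm] at this
  have hφ1 : deriv (fun t : ℝ => Real.exp (δ * t)) = fun t => δ * Real.exp (δ * t) :=
    funext fun t => (hφ t).deriv
  have h1 := (HL.log_norm h).comp_real (φ := fun t => Real.exp (δ * t)) (by fun_prop)
  rw [grad_log_norm h, hφ1, ((hφ _).const_mul δ).deriv] at h1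
  refine (h1.of_eq ?_).congr ?_
  · rw [Real.rpow_sub h0, Real.rpow_def_of_pos h0]
    norm_num
    rw [mul_comm δ (Real.log _)]; field_simp
  · filter_upwards [isOpen_ne.mem_nhds h] with w hw
    rw [Real.rpow_def_of_pos (norm_pos_iff.2 (sub_ne_zero.2 hw)), mul_comm]

theorem HL.sum_log {z : ℂ} (E : Finset ℂ) (h : z ∉ E) :
    HL (fun w => ∑ p ∈ E, Real.log ‖w - p‖) z 0 := by
  classical
  induction E using Finset.induction_on with
  | empty => simpa using HL.const 0 z
  | insert p s hp ih =>
    simp only [Finset.mem_insert, not_or] at h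
    simp only [Finset.sum_insert hp]
    simpa using (HL.log_norm h.1).add (ih h.2)

theorem maxP {K : Set ℂ} (hK : IsCompact K) (E : Finset ℂ) {f : ℂ → ℝ} (hf : ContinuousOn f K)
    (hb : ∀ z ∈ K, z ∉ interior K → f z ≤ 0)
    (hi : ∀ z ∈ interior K, z ∉ E → 0 < f z → ∃ l, 0 < l ∧ HL f z l) :
    ∀ z ∈ K, f z ≤ 0 := by
  classical
  by_contra hcon
  push Not at hcon
  obtain ⟨z00, hz00, hf00⟩ := hcon
  -- move away from `E`
  obtain ⟨z0, hz0, hz0E, hf0⟩ : ∃ z0 ∈ K, z0 ∉ E ∧ 0 < f z0 := by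
    have h1 : z00 ∈ interior K := by
      by_contra h; exact absurd (hb _ hz00 h) (not_le.2 hf00)
    have h2 : ∀ᶠ w in 𝓝 z00, w ∈ interior K ∧ 0 < f w := by
      have hc : ContinuousAt f z00 := hf.continuousAt (mem_interior_iff_mem_nhds.1 h1)
      exact Filter.Eventually.and (isOpen_interior.mem_nhds h1) (hc.eventually (lt_mem_nhds hf00))
    have hd : Dense ((E : Set ℂ)ᶜ) := (E.countable_toSet).dense_compl ℝ
    obtain ⟨w, hw1, hw2⟩ := hd.inter_nhds_nonempty h2
    exact ⟨w, interior_subset hw2.1, by simpa using hw1, hw2.2⟩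
  obtain ⟨R, hR0, hR⟩ : ∃ R : ℝ, 0 < R ∧ ∀ z ∈ K, ∀ p ∈ E, ‖z - p‖ ≤ R := by
    obtain ⟨C, hC⟩ := (hK.union E.finite_toSet.isCompact).isBounded.exists_norm_le
    refine ⟨2 * |C| + 1, by positivity, fun z hz p hp => ?_⟩
    have h1 := hC z (Or.inl hz)
    have h2 := hC p (Or.inr hp)
    have := norm_sub_le z p
    linarith [le_abs_self C]
  set lg : ℂ → ℂ → ℝ := fun p z => Real.log ‖z - p‖ - |Real.log R|
  have hlg : ∀ z ∈ K, ∀ p ∈ E, lg p z ≤ 0 := by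
    intro z hz p hp
    simp only [lg]
    rcases eq_or_ne z p with rfl | hne
    · simp
    · have := Real.log_le_log (norm_pos_iff.2 (sub_ne_zero.2 hne)) (hR z hz p hp)
      linarith [le_abs_self (Real.log R)]
  set g : ℂ → ℝ := fun z => ∑ p ∈ E, lg p z
  have hg : ∀ z ∈ K, g z ≤ 0 := fun z hz => Finset.sum_nonpos (hlg z hz)
  have hgle : ∀ z ∈ K, ∀ p ∈ E, g z ≤ lg p z := by
    intro z hz p hp
    have : g z = lg p z + ∑ q ∈ E.erase p, lg q z := (Finset.add_sum_erase _ _ hp).symm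
    have h2 : ∑ q ∈ E.erase p, lg q z ≤ 0 :=
      Finset.sum_nonpos fun q hq => hlg z hz q (Finset.mem_of_mem_erase hq)
    linarith
  set ε : ℝ := f z0 / (2 * (1 - g z0))
  have hg1 : 0 < 1 - g z0 := by linarith [hg z0 hz0]
  have hε : 0 < ε := by positivity
  set F : ℂ → ℝ := fun z => f z + ε * g z
  have hF0 : 0 < F z0 := by
    have : ε * (1 - g z0) = f z0 / 2 := by simp only [ε]; field_simp
    simp only [F]; nlinarith
  obtain ⟨B, hB⟩ : ∃ B, ∀ z ∈ K, f z ≤ B := by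
    obtain ⟨B, hB⟩ := (hK.image_of_continuousOn hf).bddAbove
    exact ⟨B, fun z hz => hB (mem_image_of_mem f hz)⟩
  obtain ⟨ρ, hρ, hρ2⟩ : ∃ ρ : ℝ, 0 < ρ ∧ ∀ z ∈ K, ∀ p ∈ E, z ≠ p → ‖z - p‖ < ρ → F z < F z0 := by
    refine ⟨Real.exp ((F z0 - B) / ε + |Real.log R|), Real.exp_pos _, fun z hz p hp hne hlt => ?_⟩
    have h1 := Real.log_lt_log (norm_pos_iff.2 (sub_ne_zero.2 hne)) hlt
    rw [Real.log_exp] at h1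
    have h2 : lg p z < (F z0 - B) / ε := by simp only [lg]; linarith
    have h3 : ε * lg p z < F z0 - B := by
      rw [lt_div_iff₀ hε] at h2; linarith
    have h4 : ε * g z ≤ ε * lg p z := by
      apply mul_le_mul_of_nonneg_left (hgle z hz p hp) hε.le
    simp only [F] at h3 ⊢
    linarith [hB z hz]
  set U : Set ℂ := ⋃ p ∈ E, Metric.ball p ρ
  have hU : IsOpen U := isOpen_biUnion fun _ _ => Metric.isOpen_ball
  have hK' : IsCompact (K \ U) := hK.diff hU
  have hUlt : ∀ z ∈ K, z ∉ E → z ∈ U → F z < F z0 := by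
    intro z hz hzE hzU
    simp only [U, mem_iUnion] at hzU
    obtain ⟨p, hp, hzp⟩ := hzU
    rw [mem_ball_iff_norm] at hzp
    exact hρ2 z hz p hp (fun h => hzE (h ▸ hp)) hzp
  have hz0' : z0 ∈ K \ U := ⟨hz0, fun h => lt_irrefl _ (hUlt z0 hz0 hz0E h)⟩
  have hEU : ∀ z, z ∉ U → z ∉ E := by
    intro z hz hE
    exact hz (mem_biUnion (t := fun p => Metric.ball p ρ) hE (Metric.mem_ball_self hρ))
  have hHL : ∀ z, z ∉ E → HL g z 0 := by
    intro z hz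
    have h1 := (HL.sum_log E hz).sub (HL.const (∑ p ∈ E, |Real.log R|) z)
    simpa [g, lg, Finset.sum_sub_distrib] using h1
  have hFc : ContinuousOn F (K \ U) := by
    apply (hf.mono sdiff_subset).add
    apply ContinuousOn.mul continuousOn_const
    intro z hz
    exact (hHL z (hEU z hz.2)).1.continuousAt.continuousWithinAt
  obtain ⟨z1, hz1, hmax⟩ := hK'.exists_isMaxOn ⟨z0, hz0'⟩ hFc
  have h01 : F z0 ≤ F z1 := hmax hz0'
  have hf1 : 0 < f z1 := by
    have : ε * g z1 ≤ 0 := mul_nonpos_of_nonneg_of_nonpos hε.le (hg z1 hz1.1)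
    simp only [F] at h01 hF0; linarith
  have hIntr : z1 ∈ interior K := by
    by_contra h; exact absurd (hb _ hz1.1 h) (not_le.2 hf1)
  obtain ⟨l, hl, hHL1⟩ := hi z1 hIntr (hEU _ hz1.2) hf1
  have hHF : HL F z1 (l + ε * 0) := hHL1.add ((hHL z1 (hEU _ hz1.2)).const_mul ε)
  have hloc : IsLocalMax F z1 := by
    have hEo : IsOpen ((E : Set ℂ)ᶜ) := E.finite_toSet.isClosed.isOpen_compl
    filter_upwards [isOpen_interior.mem_nhds hIntr, hEo.mem_nhds (by simpa using hEU _ hz1.2)]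
      with w hw hwE
    by_cases hwU : w ∈ U
    · exact ((hUlt w (interior_subset hw) (by simpa using hwE) hwU).trans_le h01).le
    · exact hmax ⟨interior_subset hw, hwU⟩
  have := hHF.max hloc
  linarith

open Complex Real Set Topology Filter Asymptotics

theorem HL.re (z : ℂ) : HL (fun w => w.re) z 0 := by
  refine ⟨Complex.reCLM.contDiff.contDiffAt, ?_⟩
  have : fderiv ℝ (fun w : ℂ => w.re) = fun _ => Complex.reCLM :=
    funext fun w => Complex.reCLM.hasFDerivAt.fderiv
  rw [this]; simp

theorem HL.im (z : ℂ) : HL (fun w => w.im) z 0 := by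
  refine ⟨Complex.imCLM.contDiff.contDiffAt, ?_⟩
  have : fderiv ℝ (fun w : ℂ => w.im) = fun _ => Complex.imCLM :=
    funext fun w => Complex.imCLM.hasFDerivAt.fderiv
  rw [this]; simp

theorem deriv_sq_aux : deriv (fun t : ℝ => t ^ 2) = fun t => 2 * t := by
  ext t; simp

theorem HL.re_sq (z : ℂ) : HL (fun w => w.re ^ 2) z 2 := by
  have h := (HL.re z).comp_real (φ := fun t => t ^ 2) (by fun_prop)
  have : fderiv ℝ (fun w : ℂ => w.re) z = Complex.reCLM := Complex.reCLM.hasFDerivAt.fderiv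
  refine h.of_eq ?_
  rw [this, deriv_sq_aux, deriv_const_mul_field]; simp

theorem HL.im_sq (z : ℂ) : HL (fun w => w.im ^ 2) z 2 := by
  have h := (HL.im z).comp_real (φ := fun t => t ^ 2) (by fun_prop)
  have : fderiv ℝ (fun w : ℂ => w.im) z = Complex.imCLM := Complex.imCLM.hasFDerivAt.fderiv
  refine h.of_eq ?_
  rw [this, deriv_sq_aux, deriv_const_mul_field]; simp

theorem GE_half {f : ℂ → ℝ} {d K M : ℝ} (hd : 0 < d) (hM : 0 < M)
    (hf : ∀ z : ℂ, |z.re| ≤ d → |z.im| ≤ d → |f z| ≤ K ∧ ∃ l, |l| ≤ M ∧ HL f z l) :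
    fderiv ℝ f 0 1 ≤ 2 * K / d + M * d := by
  have hK : 0 ≤ K := (abs_nonneg _).trans (hf 0 (by simp [hd.le]) (by simp [hd.le])).1
  set D : Set ℂ := Icc 0 d ×ℂ Icc (-d) d
  have hD : IsCompact D := isCompact_Icc.reProdIm isCompact_Icc
  have hIntr : interior D = Ioo 0 d ×ℂ Ioo (-d) d := by
    simp only [D, Complex.interior_reProdIm, interior_Icc]
  set ψ : ℂ → ℝ := fun z => (2 * K / d ^ 2) * (z.im ^ 2 - z.re ^ 2 + (2 * d) * z.re)
    + (2 * M) * (d * z.re - z.re ^ 2)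
  have hψ : ∀ z, HL ψ z (-(4 * M)) := by
    intro z
    have h1 := (((HL.im_sq z).sub (HL.re_sq z)).add ((HL.re z).const_mul (2 * d))).const_mul
      (2 * K / d ^ 2)
    have h2 := (((HL.re z).const_mul d).sub (HL.re_sq z)).const_mul (2 * M)
    exact (h1.add h2).of_eq (by ring)
  have hbd : ∀ z ∈ D, |z.re| ≤ d ∧ |z.im| ≤ d ∧ |(-(starRingEnd ℂ) z).re| ≤ d ∧
      |(-(starRingEnd ℂ) z).im| ≤ d := by
    intro z hz
    rw [Complex.mem_reProdIm] at hz
    obtain ⟨⟨h1, h2⟩, h3, h4⟩ := hz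
    simp only [neg_re, conj_re, neg_im, conj_im, neg_neg, abs_neg]
    have : |z.re| ≤ d := abs_le.2 ⟨by linarith, h2⟩
    have : |z.im| ≤ d := abs_le.2 ⟨h3, h4⟩
    tauto
  set F : ℂ → ℝ := fun z => f z - f (-(starRingEnd ℂ) z) - ψ z
  have hF : ∀ z ∈ D, ∃ l, 0 < l ∧ HL F z l := by
    intro z hz
    obtain ⟨h1, h2, h3, h4⟩ := hbd z hz
    obtain ⟨l, hl, hl'⟩ := (hf z h1 h2).2
    obtain ⟨m, hm, hm'⟩ := (hf _ h3 h4).2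
    have hm'' : HL (fun w => f (0 + (-1) * (starRingEnd ℂ) w)) z m :=
      HL.comp_affc (by simp) (by simpa using hm')
    refine ⟨l - m - (-(4 * M)), ?_, ?_⟩
    · rw [abs_le] at hl hm; linarith
    · refine (((hl'.sub hm'').sub (hψ z))).congr (Eventually.of_forall fun w => ?_)
      simp [F]
  have key : ∀ z ∈ D, F z ≤ 0 := by
    refine maxP hD ∅ (fun z hz => ?_) (fun z hz hz' => ?_) (fun z hz _ _ => hF z (interior_subset hz))
    · obtain ⟨l, _, h⟩ := hF z hz
      exact h.1.continuousAt.continuousWithinAt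
    · obtain ⟨h1, h2, h3, h4⟩ := hbd z hz
      have b1 := abs_le.1 (hf z h1 h2).1
      have b2 := abs_le.1 (hf _ h3 h4).1
      rw [hIntr, Complex.mem_reProdIm] at hz'
      rw [Complex.mem_reProdIm] at hz
      obtain ⟨⟨x1, x2⟩, y1, y2⟩ := hz
      have hq : 0 ≤ M * (z.re * (d - z.re)) :=
        mul_nonneg hM.le (mul_nonneg x1 (by linarith))
      have hdd : 0 ≤ 2 * K / d ^ 2 := by positivity
      have main : d ^ 2 ≤ z.im ^ 2 - z.re ^ 2 + 2 * d * z.re → F z ≤ 0 := by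
        intro h
        have : 2 * K / d ^ 2 * d ^ 2 ≤ _ := mul_le_mul_of_nonneg_left h hdd
        rw [div_mul_cancel₀ _ (by positivity)] at this
        simp only [F, ψ]; nlinarith
      by_cases c1 : z.re = 0
      · have : -(starRingEnd ℂ) z = z := by apply Complex.ext <;> simp [c1]
        simp only [F, this, ψ, c1]
        have : 0 ≤ 2 * K / d ^ 2 * z.im ^ 2 := by positivity
        nlinarith
      · by_cases c2 : z.re = d
        · apply main; rw [c2]; nlinarith [sq_nonneg z.im]
        · have p1 : 0 < z.re := lt_of_le_of_ne x1 (Ne.symm c1)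
          have p2 : z.re < d := lt_of_le_of_ne x2 c2
          apply main
          have : z.im = -d ∨ z.im = d := by
            by_contra hc
            push Not at hc
            exact hz' ⟨⟨p1, p2⟩, lt_of_le_of_ne y1 (Ne.symm hc.1), lt_of_le_of_ne y2 hc.2⟩
          have : z.im ^ 2 = d ^ 2 := by rcases this with h | h <;> rw [h] ; ring
          rw [this]; nlinarith
  have hdiff : DifferentiableAt ℝ f 0 := by
    obtain ⟨l, _, h⟩ := (hf 0 (by simp [hd.le]) (by simp [hd.le])).2
    exact cd_diff h.1
  have e1 : HasDerivAt (fun x : ℝ => f (x : ℂ)) (fderiv ℝ f 0 1) 0 := by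
    have h1 : HasDerivAt (fun x : ℝ => (x : ℂ)) 1 0 := Complex.ofRealCLM.hasDerivAt
    have h2 : HasFDerivAt f (fderiv ℝ f 0) ((0 : ℝ) : ℂ) := by
      rw [Complex.ofReal_zero]; exact hdiff.hasFDerivAt
    exact h2.comp_hasDerivAt (0 : ℝ) h1
  have e2 : HasDerivAt (fun x : ℝ => f (-(x : ℂ))) (-(fderiv ℝ f 0 1)) 0 := by
    have h1 : HasDerivAt (fun x : ℝ => -(x : ℂ)) (-1) 0 := Complex.ofRealCLM.hasDerivAt.neg
    have h2 : HasFDerivAt f (fderiv ℝ f 0) (-((0 : ℝ) : ℂ)) := by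
      rw [Complex.ofReal_zero, neg_zero]; exact hdiff.hasFDerivAt
    have := h2.comp_hasDerivAt (0 : ℝ) h1
    rw [map_neg] at this
    exact this
  have e3 := (e1.sub e2).tendsto_slope_zero_right
  have e4 : fderiv ℝ f 0 1 - -(fderiv ℝ f 0 1) ≤ 4 * K / d + 2 * M * d := by
    refine le_of_tendsto e3 ?_
    filter_upwards [Ioo_mem_nhdsGT hd] with t ht
    have hk := key (t : ℂ) (by
      rw [Complex.mem_reProdIm]; exact ⟨⟨ht.1.le, ht.2.le⟩, by simp [hd.le]⟩)
    have hp : ψ (t : ℂ) ≤ t * (4 * K / d + 2 * M * d) := by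
      have : t * (4 * K / d + 2 * M * d) - ψ (t : ℂ) = (2 * K / d ^ 2) * t ^ 2 + 2 * M * t ^ 2 := by
        simp only [ψ, Complex.ofReal_re, Complex.ofReal_im]; field_simp; ring
      have : 0 ≤ (2 * K / d ^ 2) * t ^ 2 + 2 * M * t ^ 2 := by positivity
      linarith
    simp only [F, Complex.conj_ofReal] at hk
    simp only [zero_add, Pi.sub_apply, Complex.ofReal_zero, neg_zero, sub_self, sub_zero, smul_eq_mul]
    rw [inv_mul_le_iff₀ ht.1]
    linarith
  have : 2 * (2 * K / d + M * d) = 4 * K / d + 2 * M * d := by ring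
  linarith

theorem GE {f : ℂ → ℝ} {d K M : ℝ} {z0 c : ℂ} (hc : ‖c‖ = 1) (hd : 0 < d) (hM : 0 < M)
    (hf : ∀ z : ℂ, ‖z - z0‖ ≤ 2 * d → |f z| ≤ K ∧ ∃ l, |l| ≤ M ∧ HL f z l) :
    |fderiv ℝ f z0 c| ≤ 2 * K / d + M * d := by
  have hh : ∀ z : ℂ, |z.re| ≤ d → |z.im| ≤ d → ‖(z0 + c * z) - z0‖ ≤ 2 * d := by
    intro z h1 h2
    rw [add_sub_cancel_left, norm_mul, hc, one_mul]
    linarith [Complex.norm_le_abs_re_add_abs_im z]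
  have hdiff : DifferentiableAt ℝ f z0 := by
    obtain ⟨l, _, h⟩ := (hf z0 (by simp [hd.le])).2
    exact cd_diff h.1
  have hder : fderiv ℝ (fun w => f (z0 + c * w)) 0 1 = fderiv ℝ f z0 c := by
    have h1 : HasDerivAt (fun w => z0 + c * w) c 0 := by
      simpa using ((hasDerivAt_id (0 : ℂ)).const_mul c).const_add z0
    have h2 := h1.hasFDerivAt.restrictScalars ℝ
    have h3 : HasFDerivAt f (fderiv ℝ f z0) (z0 + c * 0) := by
      simpa using hdiff.hasFDerivAt
    have h4 := h3.comp (0 : ℂ) h2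
    have h5 : fderiv ℝ (fun w => f (z0 + c * w)) 0 = _ := h4.fderiv
    rw [h5]; simp
  rw [abs_le]
  constructor
  · have := GE_half (f := fun w => -f (z0 + c * w)) (K := K) hd hM (fun z h1 h2 => by
      obtain ⟨h3, l, h4, h5⟩ := hf _ (hh z h1 h2)
      exact ⟨by rwa [abs_neg], -l, by rwa [abs_neg], (h5.comp_aff hc).neg⟩)
    rw [fderiv_fun_neg] at this
    simp only [_root_.neg_apply, hder] at this
    linarith
  · have := GE_half (f := fun w => f (z0 + c * w)) (K := K) hd hM (fun z h1 h2 => by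
      obtain ⟨h3, l, h4, h5⟩ := hf _ (hh z h1 h2)
      exact ⟨h3, l, h4, h5.comp_aff hc⟩)
    rwa [hder] at this

open Complex Real Set Topology Filter Asymptotics

/-- The harmonic barrier on the first quadrant. -/
noncomputable def quadP (δ : ℝ) (h : ℂ) : ℝ := ‖h‖ ^ δ * Real.cos (δ * (Complex.arg h - π / 4))

theorem quadP_le (δ : ℝ) (h : ℂ) : quadP δ h ≤ ‖h‖ ^ δ :=
  mul_le_of_le_one_right (Real.rpow_nonneg (norm_nonneg _) _) (Real.cos_le_one _)

theorem quadP_ge {δ : ℝ} (h0 : 0 < δ) (h2 : δ < 2) {h : ℂ} (hr : 0 ≤ h.re) (hi : 0 ≤ h.im) :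
    Real.cos (δ * (π / 4)) * ‖h‖ ^ δ ≤ quadP δ h := by
  unfold quadP
  rw [mul_comm]
  apply mul_le_mul_of_nonneg_left _ (Real.rpow_nonneg (norm_nonneg _) _)
  have h1 : 0 ≤ Complex.arg h := Complex.arg_nonneg_iff.2 hi
  have h3 : Complex.arg h ≤ π / 2 := Complex.arg_le_pi_div_two_iff.2 (Or.inl hr)
  rw [← Real.cos_abs (δ * (Complex.arg h - π / 4))]
  apply Real.cos_le_cos_of_nonneg_of_le_pi (abs_nonneg _)
  · nlinarith [Real.pi_pos]
  · rw [abs_mul, abs_of_pos h0]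
    apply mul_le_mul_of_nonneg_left _ h0.le
    rw [abs_le]; constructor <;> linarith

theorem quadP_slit {h : ℂ} (hr : 0 ≤ h.re) (hi : 0 ≤ h.im) (hne : h ≠ 0) :
    h ∈ Complex.slitPlane := by
  rw [Complex.mem_slitPlane_iff]
  by_contra hc
  push Not at hc
  exact hne (Complex.ext (le_antisymm hc.1 hr) hc.2)

theorem quadP_HL (δ : ℝ) {h : ℂ} (hs : h ∈ Complex.slitPlane) : HL (quadP δ) h 0 := by
  have h1 : AnalyticAt ℂ (fun w => Complex.exp (δ * (Complex.log w - (π / 4 : ℝ) * Complex.I))) h := by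
    have := analyticAt_clog hs
    fun_prop
  have h2 := HL.harm h1.harmonicAt_re
  refine h2.congr ?_
  filter_upwards [Complex.isOpen_slitPlane.mem_nhds hs] with w hw
  have hw0 : 0 < ‖w‖ := norm_pos_iff.2 (Complex.slitPlane_ne_zero hw)
  simp only [quadP, Complex.exp_re, Complex.re_ofReal_mul, Complex.im_ofReal_mul, Complex.sub_re,
    Complex.sub_im, Complex.log_re, Complex.log_im]
  rw [Real.rpow_def_of_pos hw0]
  simp [mul_comm]

theorem quadP_cont {δ : ℝ} (hδ : 0 < δ) {h : ℂ} (hr : 0 ≤ h.re) (hi : 0 ≤ h.im) :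
    ContinuousAt (quadP δ) h := by
  rcases eq_or_ne h 0 with rfl | hne
  · have h1 : Tendsto (fun w : ℂ => ‖w‖ ^ δ) (𝓝 0) (𝓝 0) := by
      have : ContinuousAt (fun w : ℂ => ‖w‖ ^ δ) 0 :=
        continuous_norm.continuousAt.rpow_const (Or.inr hδ.le)
      simpa [ContinuousAt, Real.zero_rpow hδ.ne'] using this
    have h0 : quadP δ 0 = 0 := by simp [quadP, Real.zero_rpow hδ.ne']
    rw [ContinuousAt, h0]
    refine squeeze_zero_norm (fun w => ?_) h1
    rw [quadP, norm_mul, Real.norm_of_nonneg (Real.rpow_nonneg (norm_nonneg _) _)]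
    exact mul_le_of_le_one_right (Real.rpow_nonneg (norm_nonneg _) _) (Real.abs_cos_le_one _)
  · exact (quadP_HL δ (quadP_slit hr hi hne)).1.continuousAt

theorem rpow_add_le {δ s t r : ℝ} (h0 : 0 < δ) (h2 : δ < 2) (hs : 0 ≤ s) (ht : 0 ≤ t)
    (hr0 : 0 ≤ r) (hr : r ≤ s + t) : r ^ δ ≤ 4 * (s ^ δ + t ^ δ) := by
  have key : ∀ m : ℝ, 0 ≤ m → r ≤ 2 * m → r ^ δ ≤ 4 * m ^ δ := by
    intro m hm hrm
    calc r ^ δ ≤ (2 * m) ^ δ := Real.rpow_le_rpow hr0 hrm h0.le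
      _ = 2 ^ δ * m ^ δ := Real.mul_rpow (by norm_num) hm
      _ ≤ 4 * m ^ δ := by
        apply mul_le_mul_of_nonneg_right _ (Real.rpow_nonneg hm _)
        calc (2:ℝ) ^ δ ≤ 2 ^ (2:ℝ) := Real.rpow_le_rpow_of_exponent_le (by norm_num) h2.le
          _ = 4 := by norm_num
  have a1 := Real.rpow_nonneg hs δ
  have a2 := Real.rpow_nonneg ht δ
  rcases le_total s t with h | h
  · linarith [key t ht (by linarith)]
  · linarith [key s hs (by linarith)]

/-- The standing hypothesis: continuity on a closed ball with Laplacian bound off zero. -/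
def Hyp (v : ℂ → ℝ) (R δ M : ℝ) : Prop :=
  ContinuousOn v (Metric.closedBall 0 R) ∧
    ∀ z, z ≠ 0 → ‖z‖ < R → ∃ l, |l| ≤ M * ‖z‖ ^ (δ - 2) ∧ HL v z l

theorem Hyp.neg {v : ℂ → ℝ} {R δ M : ℝ} (h : Hyp v R δ M) : Hyp (fun z => -v z) R δ M := by
  refine ⟨h.1.neg, fun z hz hzR => ?_⟩
  obtain ⟨l, hl, hl'⟩ := h.2 z hz hzR
  exact ⟨-l, by rwa [abs_neg], hl'.neg⟩

theorem Hyp.sub_HL {v : ℂ → ℝ} {R δ M M' : ℝ} (h : Hyp v R δ M) (hM : M < M' * δ ^ 2)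
    {z : ℂ} (hz : z ≠ 0) (hzR : ‖z‖ < R) :
    (∃ l, 0 < l ∧ HL (fun z => v z + M' * ‖z‖ ^ δ) z l) ∧
    (∃ l, l < 0 ∧ HL (fun z => v z - M' * ‖z‖ ^ δ) z l) := by
  obtain ⟨l, hl, hl'⟩ := h.2 z hz hzR
  have h1 := (HL.rpow_norm hz δ).const_mul M'
  simp only [sub_zero] at h1
  have h2 : 0 < ‖z‖ ^ (δ - 2) := Real.rpow_pos_of_pos (norm_pos_iff.2 hz) _
  have h3 : M * ‖z‖ ^ (δ - 2) < M' * (δ ^ 2 * ‖z‖ ^ (δ - 2)) := by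
    rw [← mul_assoc]; exact mul_lt_mul_of_pos_right hM h2
  rw [abs_le] at hl
  exact ⟨⟨_, by linarith, hl'.add h1⟩, ⟨_, by linarith, hl'.sub h1⟩⟩

theorem Hyp.cont_p {v : ℂ → ℝ} {R δ M : ℝ} (h : Hyp v R δ M) (hδ : 0 < δ) (M' : ℝ) :
    ContinuousOn (fun z => v z + M' * ‖z‖ ^ δ) (Metric.closedBall 0 R) ∧
    ContinuousOn (fun z => v z - M' * ‖z‖ ^ δ) (Metric.closedBall 0 R) := by
  have : Continuous (fun z : ℂ => M' * ‖z‖ ^ δ) :=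
    continuous_const.mul (continuous_norm.rpow_const fun _ => Or.inr hδ.le)
  exact ⟨h.1.add this.continuousOn, h.1.sub this.continuousOn⟩

theorem SD1 {v : ℂ → ℝ} {R δ M : ℝ} (hR : 0 < R) (h0 : 0 < δ) (h2 : δ < 2)
    (hv : Hyp v R δ M) (hM0 : 0 ≤ M) :
    ∃ C, 0 ≤ C ∧ ∀ a c h : ℂ, ‖a‖ ≤ R / 2 → ‖c‖ = 1 → ‖h‖ ≤ R / 2 → 0 ≤ h.re → 0 ≤ h.im →
      v (a + c * h) - v (a + c * (starRingEnd ℂ) h) - v (a + (-c) * (starRingEnd ℂ) h)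
        + v (a + (-c) * h) ≤ C * (‖h‖ ^ δ + ‖a‖ ^ δ) := by
  obtain ⟨K0, hK0⟩ := (isCompact_closedBall (0:ℂ) R).exists_bound_of_continuousOn hv.1
  have hK00 : 0 ≤ K0 := (norm_nonneg _).trans (hK0 0 (by simp [hR.le]))
  set κ := Real.cos (δ * (π / 4))
  have hκ : 0 < κ := Real.cos_pos_of_mem_Ioo ⟨by nlinarith [Real.pi_pos], by nlinarith [Real.pi_pos]⟩
  set M' := (M + 1) / δ ^ 2
  have hM' : 0 < M' := by positivity
  have hM : M < M' * δ ^ 2 := by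
    rw [div_mul_cancel₀ _ (by positivity)]; linarith
  set ρ := R / 2
  have hρ : 0 < ρ := by positivity
  have hρδ : 0 < ρ ^ δ := Real.rpow_pos_of_pos hρ _
  set N := 16 * M' + 4 * K0 / ρ ^ δ
  have hN : 0 ≤ N := by positivity
  refine ⟨N / κ + 16 * M', by positivity, fun a c h ha hc hh hhr hhi => ?_⟩
  set p : ℂ → ℝ := fun z => v z + M' * ‖z‖ ^ δ
  set q : ℂ → ℝ := fun z => v z - M' * ‖z‖ ^ δ
  obtain ⟨hpc, hqc⟩ := hv.cont_p h0 M'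
  change ContinuousOn p _ at hpc
  change ContinuousOn q _ at hqc
  set D : Set ℂ := Metric.closedBall 0 ρ ∩ {z | 0 ≤ z.re ∧ 0 ≤ z.im}
  have hD : IsCompact D := by
    apply (isCompact_closedBall (0:ℂ) ρ).inter_right
    exact (isClosed_le continuous_const Complex.continuous_re).inter
      (isClosed_le continuous_const Complex.continuous_im)
  have hDi : ∀ z ∈ D, z ∉ interior D → z.re = 0 ∨ z.im = 0 ∨ ‖z‖ = ρ := by
    intro z hz hz'
    by_contra hcon
    push Not at hcon
    apply hz'
    rw [mem_interior]
    refine ⟨Metric.ball 0 ρ ∩ {z | 0 < z.re ∧ 0 < z.im}, ?_, ?_, ?_⟩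
    · rintro w ⟨h1, h2, h3⟩
      exact ⟨Metric.ball_subset_closedBall h1, h2.le, h3.le⟩
    · exact Metric.isOpen_ball.inter ((isOpen_lt continuous_const Complex.continuous_re).inter
        (isOpen_lt continuous_const Complex.continuous_im))
    · obtain ⟨h1, h2, h3⟩ := hz
      rw [mem_closedBall_zero_iff] at h1
      exact ⟨mem_ball_zero_iff.2 (lt_of_le_of_ne h1 hcon.2.2), lt_of_le_of_ne h2 (Ne.symm hcon.1),
        lt_of_le_of_ne h3 (Ne.symm hcon.2.1)⟩
  have hc0 : c ≠ 0 := by rintro rfl; simp at hc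
  have hcn : ‖-c‖ = 1 := by rwa [norm_neg]
  have hnle : ∀ b w : ℂ, ‖b‖ = 1 → ‖a + b * w‖ ≤ ‖a‖ + ‖w‖ := by
    intro b w hb
    calc ‖a + b * w‖ ≤ ‖a‖ + ‖b * w‖ := norm_add_le _ _
      _ = ‖a‖ + ‖w‖ := by rw [norm_mul, hb, one_mul]
  have hmem : ∀ b w : ℂ, ‖b‖ = 1 → ‖w‖ ≤ ρ → a + b * w ∈ Metric.closedBall (0:ℂ) R := by
    intro b w hb hw
    rw [mem_closedBall_zero_iff]
    have := hnle b w hb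
    simp only [ρ] at *; linarith
  have hpw : ∀ b w : ℂ, ‖b‖ = 1 → ‖a + b * w‖ ^ δ ≤ 4 * (‖w‖ ^ δ + ‖a‖ ^ δ) := by
    intro b w hb
    exact rpow_add_le h0 h2 (norm_nonneg _) (norm_nonneg _) (norm_nonneg _)
      (by linarith [hnle b w hb])
  set E : Finset ℂ := {-(c⁻¹ * a), c⁻¹ * a, (starRingEnd ℂ) (-(c⁻¹ * a)), (starRingEnd ℂ) (c⁻¹ * a)}
  have hE : ∀ z, z ∉ E → a + c * z ≠ 0 ∧ a + (-c) * z ≠ 0 ∧ a + c * (starRingEnd ℂ) z ≠ 0 ∧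
      a + (-c) * (starRingEnd ℂ) z ≠ 0 := by
    have k1 : ∀ z, a + c * z = 0 → z = -(c⁻¹ * a) := by
      intro z hz; field_simp; linear_combination hz
    have k2 : ∀ z, a + (-c) * z = 0 → z = c⁻¹ * a := by
      intro z hz; field_simp; linear_combination -hz
    intro z hz
    simp only [E, Finset.mem_insert, Finset.mem_singleton, not_or] at hz
    obtain ⟨z1, z2, z3, z4⟩ := hz
    refine ⟨fun h => z1 (k1 _ h), fun h => z2 (k2 _ h), fun h => z3 ?_, fun h => z4 ?_⟩
    · rw [← k1 _ h]; simp
    · rw [← k2 _ h]; simp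
  set f : ℂ → ℝ := fun z => p (a + c * z) + p (a + (-c) * z) - q (a + c * (starRingEnd ℂ) z)
    - q (a + (-c) * (starRingEnd ℂ) z) - (N / κ) * quadP δ z - 16 * M' * ‖a‖ ^ δ
  have key : ∀ z ∈ D, f z ≤ 0 := by
    refine maxP hD E ?_ ?_ ?_
    · have hmp : ∀ b : ℂ, ‖b‖ = 1 → MapsTo (fun z => a + b * z) D (Metric.closedBall 0 R) :=
        fun b hb w hw => hmem b w hb (mem_closedBall_zero_iff.1 hw.1)
      have hmq : ∀ b : ℂ, ‖b‖ = 1 → MapsTo (fun z => a + b * (starRingEnd ℂ) z) D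
          (Metric.closedBall 0 R) :=
        fun b hb w hw => hmem b _ hb (by
          rw [RCLike.norm_conj]; exact mem_closedBall_zero_iff.1 hw.1)
      have hcp : ∀ b : ℂ, ContinuousOn (fun z => a + b * z) D := fun b => by fun_prop
      have hcq : ∀ b : ℂ, ContinuousOn (fun z => a + b * (starRingEnd ℂ) z) D := fun b =>
        (continuous_const.add (continuous_const.mul Complex.continuous_conj)).continuousOn
      have c1 := hpc.comp (hcp c) (hmp c hc)
      have c2 := hpc.comp (hcp (-c)) (hmp _ hcn)
      have c3 := hqc.comp (hcq c) (hmq c hc)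
      have c4 := hqc.comp (hcq (-c)) (hmq _ hcn)
      have c5 : ContinuousOn (quadP δ) D := fun z hz =>
        (quadP_cont h0 hz.2.1 hz.2.2).continuousWithinAt
      exact ((((c1.add c2).sub c3).sub c4).sub (continuousOn_const.mul c5)).sub continuousOn_const
    · intro z hz hz'
      have hzρ := mem_closedBall_zero_iff.1 hz.1
      have hP := quadP_ge h0 h2 hz.2.1 hz.2.2
      have hP2 : N * ‖z‖ ^ δ ≤ (N / κ) * quadP δ z := by
        calc N * ‖z‖ ^ δ = (N / κ) * (κ * ‖z‖ ^ δ) := by field_simp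
          _ ≤ _ := mul_le_mul_of_nonneg_left hP (by positivity)
      have w1 := mul_le_mul_of_nonneg_left (hpw c z hc) hM'.le
      have w2 := mul_le_mul_of_nonneg_left (hpw (-c) z hcn) hM'.le
      have w3 := mul_le_mul_of_nonneg_left (hpw c ((starRingEnd ℂ) z) hc) hM'.le
      have w4 := mul_le_mul_of_nonneg_left (hpw (-c) ((starRingEnd ℂ) z) hcn) hM'.le
      rw [RCLike.norm_conj] at w3 w4
      have hNz : N * ‖z‖ ^ δ = 16 * M' * ‖z‖ ^ δ + 4 * K0 / ρ ^ δ * ‖z‖ ^ δ := by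
        simp only [N]; ring
      have hzn := Real.rpow_nonneg (norm_nonneg z) δ
      have hS : v (a + c * z) - v (a + c * (starRingEnd ℂ) z) - v (a + (-c) * (starRingEnd ℂ) z)
        + v (a + (-c) * z) ≤ 4 * K0 / ρ ^ δ * ‖z‖ ^ δ := by
        rcases hDi z hz hz' with h | h | h
        · have e1 : (starRingEnd ℂ) z = -z := by apply Complex.ext <;> simp [h]
          have : 0 ≤ 4 * K0 / ρ ^ δ * ‖z‖ ^ δ := by positivity
          rw [e1]
          simp only [mul_neg, neg_mul, neg_neg]
          linarith
        · have e1 : (starRingEnd ℂ) z = z := by apply Complex.ext <;> simp [h]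
          have : 0 ≤ 4 * K0 / ρ ^ δ * ‖z‖ ^ δ := by positivity
          rw [e1]
          linarith
        · rw [h, div_mul_cancel₀ _ hρδ.ne']
          have hcz : ‖(starRingEnd ℂ) z‖ ≤ ρ := by rw [RCLike.norm_conj]; exact hzρ
          have b1 := abs_le.1 (hK0 _ (hmem c z hc hzρ))
          have b2 := abs_le.1 (hK0 _ (hmem (-c) z hcn hzρ))
          have b3 := abs_le.1 (hK0 _ (hmem c _ hc hcz))
          have b4 := abs_le.1 (hK0 _ (hmem (-c) _ hcn hcz))
          linarith [b1.2, b2.2, b3.1, b4.1]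
      simp only [f, p, q]
      linarith
    · intro z hz hzE _
      have hzD := interior_subset hz
      have hzs : z ≠ 0 ∧ ‖z‖ < ρ := by
        have h1 : z ∈ interior (Metric.closedBall (0:ℂ) ρ) := interior_mono inter_subset_left hz
        rw [interior_closedBall _ hρ.ne'] at h1
        have h2 : z ∈ interior ({z : ℂ | 0 ≤ z.re}) := interior_mono (fun w hw => hw.2.1) hz
        rw [Complex.interior_setOfPred_le_re] at h2
        refine ⟨?_, mem_ball_zero_iff.1 h1⟩
        rintro rfl
        simp at h2
      have hlt : ∀ b w : ℂ, ‖b‖ = 1 → ‖w‖ = ‖z‖ → ‖a + b * w‖ < R := by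
        intro b w hb hw
        have := hnle b w hb
        rw [hw] at this
        have := hzs.2
        simp only [ρ] at *; linarith
      obtain ⟨e1, e2, e3, e4⟩ := hE z hzE
      obtain ⟨l1, p1, g1⟩ := (hv.sub_HL hM e1 (hlt c z hc rfl)).1
      obtain ⟨l2, p2, g2⟩ := (hv.sub_HL hM e2 (hlt (-c) z hcn rfl)).1
      obtain ⟨l3, p3, g3⟩ := (hv.sub_HL hM e3 (hlt c _ hc (RCLike.norm_conj _))).2
      obtain ⟨l4, p4, g4⟩ := (hv.sub_HL hM e4 (hlt (-c) _ hcn (RCLike.norm_conj _))).2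
      have g5 := (quadP_HL δ (quadP_slit hzD.2.1 hzD.2.2 hzs.1)).const_mul (N / κ)
      have := (((((g1.comp_aff hc).add (g2.comp_aff hcn)).sub (g3.comp_affc hc)).sub
        (g4.comp_affc hcn)).sub g5).sub (HL.const (16 * M' * ‖a‖ ^ δ) z)
      exact ⟨_, by linarith, this⟩
  have hk := key h ⟨mem_closedBall_zero_iff.2 hh, hhr, hhi⟩
  have n1 : ∀ w : ℂ, 0 ≤ M' * ‖w‖ ^ δ := fun w => mul_nonneg hM'.le (Real.rpow_nonneg (norm_nonneg _) _)
  have hP := mul_le_mul_of_nonneg_left (quadP_le δ h) (show 0 ≤ N / κ by positivity)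
  have n2 : 0 ≤ (N / κ) * ‖a‖ ^ δ := mul_nonneg (by positivity) (Real.rpow_nonneg (norm_nonneg _) _)
  have n3 := n1 h
  simp only [f, p, q] at hk
  have m1 := n1 (a + c * h)
  have m2 := n1 (a + (-c) * h)
  have m3 := n1 (a + c * (starRingEnd ℂ) h)
  have m4 := n1 (a + (-c) * (starRingEnd ℂ) h)
  linarith

open Complex Real Set Topology Filter Asymptotics

theorem SD1' {v : ℂ → ℝ} {R δ M : ℝ} (hR : 0 < R) (h0 : 0 < δ) (h2 : δ < 2)
    (hv : Hyp v R δ M) (hM0 : 0 ≤ M) :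
    ∃ C, 0 ≤ C ∧ ∀ a c h : ℂ, ‖a‖ ≤ R / 2 → ‖c‖ = 1 → ‖h‖ ≤ R / 2 →
      |v (a + c * h) - v (a + c * (starRingEnd ℂ) h) - v (a + (-c) * (starRingEnd ℂ) h)
        + v (a + (-c) * h)| ≤ C * (‖h‖ ^ δ + ‖a‖ ^ δ) := by
  obtain ⟨C1, hC1, H1⟩ := SD1 hR h0 h2 hv hM0
  obtain ⟨C2, hC2, H2⟩ := SD1 hR h0 h2 hv.neg hM0
  refine ⟨C1 + C2, by positivity, fun a c h ha hc hh => ?_⟩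
  set h' : ℂ := ⟨|h.re|, |h.im|⟩
  have hn : ‖h'‖ = ‖h‖ := by
    simp [h', Complex.norm_def, Complex.normSq_apply]
  have b1 := H1 a c h' ha hc (hn ▸ hh) (abs_nonneg _) (abs_nonneg _)
  have b2 := H2 a c h' ha hc (hn ▸ hh) (abs_nonneg _) (abs_nonneg _)
  rw [hn] at b1 b2
  have n0 : 0 ≤ ‖h‖ ^ δ + ‖a‖ ^ δ :=
    add_nonneg (Real.rpow_nonneg (norm_nonneg _) _) (Real.rpow_nonneg (norm_nonneg _) _)
  have n1 := mul_nonneg hC1 n0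
  have n2 := mul_nonneg hC2 n0
  have hcases : h' = h ∨ h' = -h ∨ h' = (starRingEnd ℂ) h ∨ h' = -(starRingEnd ℂ) h := by
    rcases abs_cases h.re with ⟨r1, _⟩ | ⟨r1, _⟩ <;> rcases abs_cases h.im with ⟨i1, _⟩ | ⟨i1, _⟩
    · left; apply Complex.ext <;> simp [h', r1, i1]
    · right; right; left; apply Complex.ext <;> simp [h', r1, i1]
    · right; right; right; apply Complex.ext <;> simp [h', r1, i1]
    · right; left; apply Complex.ext <;> simp [h', r1, i1]
  rw [abs_le]
  rcases hcases with e | e | e | e <;> rw [e] at b1 b2 <;>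
    simp only [map_neg, Complex.conj_conj, mul_neg, neg_mul, neg_neg] at b1 b2 ⊢ <;>
    constructor <;> linarith

theorem SD_same {v : ℂ → ℝ} {R δ M : ℝ} (hR : 0 < R) (h0 : 0 < δ) (h2 : δ < 2)
    (hv : Hyp v R δ M) (hM0 : 0 ≤ M) :
    ∃ C, 0 ≤ C ∧ ∀ a h h' : ℂ, ‖a‖ ≤ R / 2 → ‖h‖ ≤ R / 2 → ‖h'‖ = ‖h‖ →
      (v (a + h') + v (a - h')) - (v (a + h) + v (a - h)) ≤ C * (‖h‖ ^ δ + ‖a‖ ^ δ) := by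
  obtain ⟨C, hC, H⟩ := SD1' hR h0 h2 hv hM0
  refine ⟨C, hC, fun a h h' ha hh hh' => ?_⟩
  rcases eq_or_ne h 0 with rfl | hne
  · have : h' = 0 := by simpa using hh'
    subst this
    simp only [sub_self]
    exact mul_nonneg hC (add_nonneg (Real.rpow_nonneg (norm_nonneg _) _)
      (Real.rpow_nonneg (norm_nonneg _) _))
  have hne' : h' ≠ 0 := by rw [← norm_pos_iff, hh']; exact norm_pos_iff.2 hne
  set c : ℂ := Complex.exp (((Complex.arg h' + Complex.arg h) / 2 : ℝ) * Complex.I)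
  set k : ℂ := (‖h‖ : ℂ) * Complex.exp (((Complex.arg h' - Complex.arg h) / 2 : ℝ) * Complex.I)
  have hc : ‖c‖ = 1 := Complex.norm_exp_ofReal_mul_I _
  have hk : ‖k‖ = ‖h‖ := by
    simp only [k, norm_mul, Complex.norm_exp_ofReal_mul_I]; simp
  have e1 : c * k = h' := by
    have : c * k = (‖h'‖ : ℂ) * Complex.exp (Complex.arg h' * Complex.I) := by
      rw [hh']
      simp only [c, k]
      rw [mul_left_comm, ← Complex.exp_add]
      congr 2; push_cast; ring
    rw [this, Complex.norm_mul_exp_arg_mul_I]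
  have e2 : c * (starRingEnd ℂ) k = h := by
    have : c * (starRingEnd ℂ) k = (‖h‖ : ℂ) * Complex.exp (Complex.arg h * Complex.I) := by
      simp only [c, k, map_mul, ← Complex.exp_conj, Complex.conj_ofReal, Complex.conj_I]
      rw [mul_left_comm, ← Complex.exp_add]
      congr 2; push_cast; ring
    rw [this, Complex.norm_mul_exp_arg_mul_I]
  have := H a c k ha hc (hk ▸ hh)
  simp only [neg_mul, e1, e2, hk, ← sub_eq_add_neg] at this
  have := (abs_le.1 this).2
  linarith

theorem SD_half {v : ℂ → ℝ} {R δ M : ℝ} (hR : 0 < R) (h0 : 0 < δ) (h2 : δ < 2)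
    (hv : Hyp v R δ M) (hM0 : 0 ≤ M) :
    ∃ C, 0 ≤ C ∧ ∀ a h : ℂ, ‖a‖ ≤ R / 2 → ‖h‖ ≤ R / 2 →
      - (C * (‖h‖ ^ δ + ‖a‖ ^ δ)) ≤ v (a + h) + v (a - h) - 2 * v a := by
  obtain ⟨C, hC, H⟩ := SD_same hR h0 h2 hv hM0
  set M' := (M + 1) / δ ^ 2
  have hM' : 0 < M' := by positivity
  have hM : M < M' * δ ^ 2 := by
    rw [div_mul_cancel₀ _ (by positivity)]; linarith
  refine ⟨C + 8 * M', by positivity, fun a h ha hh => ?_⟩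
  set p : ℂ → ℝ := fun z => v z + M' * ‖z‖ ^ δ
  have hpc := (hv.cont_p h0 M').1
  change ContinuousOn p _ at hpc
  set T := ‖h‖ ^ δ + ‖a‖ ^ δ
  set c0 := v (a + h) + v (a - h) + (C + 8 * M') * T
  set f : ℂ → ℝ := fun z => p (a + 1 * z) + p (a + (-1) * z) - c0
  have hn1 : ‖(-1 : ℂ)‖ = 1 := by simp
  have hnle : ∀ b w : ℂ, ‖b‖ = 1 → ‖a + b * w‖ ≤ ‖a‖ + ‖w‖ := by
    intro b w hb
    calc ‖a + b * w‖ ≤ ‖a‖ + ‖b * w‖ := norm_add_le _ _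
      _ = ‖a‖ + ‖w‖ := by rw [norm_mul, hb, one_mul]
  have hpw : ∀ b w : ℂ, ‖b‖ = 1 → ‖a + b * w‖ ^ δ ≤ 4 * (‖w‖ ^ δ + ‖a‖ ^ δ) := by
    intro b w hb
    exact rpow_add_le h0 h2 (norm_nonneg _) (norm_nonneg _) (norm_nonneg _)
      (by linarith [hnle b w hb])
  have hbdry : ∀ z : ℂ, ‖z‖ = ‖h‖ → f z ≤ 0 := by
    intro z hz
    have b1 := H a h z ha hh hz
    have w1 := mul_le_mul_of_nonneg_left (hpw 1 z (by simp)) hM'.le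
    have w2 := mul_le_mul_of_nonneg_left (hpw (-1) z hn1) hM'.le
    rw [hz] at w1 w2
    simp only [f, p, c0, T]
    simp only [one_mul, neg_mul, ← sub_eq_add_neg] at *
    linarith
  have key : ∀ z ∈ Metric.closedBall (0:ℂ) ‖h‖, f z ≤ 0 := by
    refine maxP (isCompact_closedBall _ _) {a, -a} ?_ ?_ ?_
    · have hmp : ∀ b : ℂ, ‖b‖ = 1 → MapsTo (fun z => a + b * z) (Metric.closedBall (0:ℂ) ‖h‖)
          (Metric.closedBall 0 R) := by
        intro b hb w hw
        rw [mem_closedBall_zero_iff] at hw ⊢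
        linarith [hnle b w hb]
      have hcp : ∀ b : ℂ, ContinuousOn (fun z => a + b * z) (Metric.closedBall (0:ℂ) ‖h‖) :=
        fun b => by fun_prop
      exact ((hpc.comp (hcp 1) (hmp 1 (by simp))).add (hpc.comp (hcp (-1)) (hmp _ hn1))).sub
        continuousOn_const
    · intro z hz hz'
      apply hbdry
      apply le_antisymm (mem_closedBall_zero_iff.1 hz)
      by_contra hlt
      exact hz' (Metric.ball_subset_interior_closedBall (mem_ball_zero_iff.2 (not_le.1 hlt)))
    · intro z hz hzE hfz
      simp only [Finset.mem_insert, Finset.mem_singleton, not_or] at hzE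
      have hlt : ‖z‖ < ‖h‖ := by
        have h1 := mem_closedBall_zero_iff.1 (interior_subset hz)
        refine lt_of_le_of_ne h1 fun e => ?_
        exact absurd (hbdry z e) (not_le.2 hfz)
      have e1 : a + 1 * z ≠ 0 := fun e => hzE.2 (by linear_combination e)
      have e2 : a + (-1) * z ≠ 0 := fun e => hzE.1 (by linear_combination -e)
      obtain ⟨l1, p1, g1⟩ := (hv.sub_HL hM e1 (by linarith [hnle 1 z (by simp)])).1
      obtain ⟨l2, p2, g2⟩ := (hv.sub_HL hM e2 (by linarith [hnle (-1) z hn1])).1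
      exact ⟨_, by linarith, ((g1.comp_aff (by simp)).add (g2.comp_aff hn1)).sub (HL.const c0 z)⟩
  have hk := key 0 (by simp)
  have n1 : 0 ≤ M' * ‖a‖ ^ δ := mul_nonneg hM'.le (Real.rpow_nonneg (norm_nonneg _) _)
  simp only [f, p, c0, mul_zero, add_zero] at hk
  linarith

theorem SD {v : ℂ → ℝ} {R δ M : ℝ} (hR : 0 < R) (h0 : 0 < δ) (h2 : δ < 2)
    (hv : Hyp v R δ M) (hM0 : 0 ≤ M) :
    ∃ C, 0 ≤ C ∧ ∀ a h : ℂ, ‖a‖ ≤ R / 2 → ‖h‖ ≤ R / 2 →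
      |v (a + h) + v (a - h) - 2 * v a| ≤ C * (‖h‖ ^ δ + ‖a‖ ^ δ) := by
  obtain ⟨C1, hC1, H1⟩ := SD_half hR h0 h2 hv hM0
  obtain ⟨C2, hC2, H2⟩ := SD_half hR h0 h2 hv.neg hM0
  refine ⟨C1 + C2, by positivity, fun a h ha hh => ?_⟩
  have b1 := H1 a h ha hh
  have b2 := H2 a h ha hh
  have n0 : 0 ≤ ‖h‖ ^ δ + ‖a‖ ^ δ :=
    add_nonneg (Real.rpow_nonneg (norm_nonneg _) _) (Real.rpow_nonneg (norm_nonneg _) _)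
  have n1 := mul_nonneg hC1 n0
  have n2 := mul_nonneg hC2 n0
  rw [abs_le]; constructor <;> linarith

open Complex Real Set Topology Filter Asymptotics

theorem dyadic {r0 t : ℝ} (h0 : 0 < t) (h1 : t ≤ r0) :
    ∃ k : ℕ, r0 / 2 ≤ 2 ^ k * t ∧ 2 ^ k * t ≤ r0 := by
  obtain ⟨k, hk1, hk2⟩ := exists_nat_pow_near (x := r0 / t) (y := 2) ((one_le_div h0).2 h1) (by norm_num)
  refine ⟨k, ?_, ?_⟩
  · rw [div_lt_iff₀ h0, pow_succ] at hk2; linarith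
  · rw [le_div_iff₀ h0] at hk1; exact hk1

theorem half_rpow {δ r t : ℝ} (h0 : 0 < δ) (h2 : δ < 2) (hr : 0 < r) (h1 : r / 4 ≤ t)
    (h3 : t ≤ 2 * r) : t ^ δ ≤ 4 * r ^ δ ∧ t ^ (δ - 2) ≤ 16 * r ^ (δ - 2) := by
  have ht : 0 < t := by linarith
  constructor
  · calc t ^ δ ≤ (2 * r) ^ δ := Real.rpow_le_rpow ht.le h3 h0.le
      _ = 2 ^ δ * r ^ δ := Real.mul_rpow (by norm_num) hr.le
      _ ≤ 4 * r ^ δ := by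
        apply mul_le_mul_of_nonneg_right _ (Real.rpow_nonneg hr.le _)
        calc (2:ℝ) ^ δ ≤ 2 ^ (2:ℝ) := Real.rpow_le_rpow_of_exponent_le (by norm_num) h2.le
          _ = 4 := by norm_num
  · calc t ^ (δ - 2) ≤ ((1 / 4) * r) ^ (δ - 2) :=
        Real.rpow_le_rpow_of_nonpos (by positivity) (by linarith) (by linarith)
      _ = (1 / 4) ^ (δ - 2) * r ^ (δ - 2) := Real.mul_rpow (by norm_num) hr.le
      _ ≤ 16 * r ^ (δ - 2) := by
        apply mul_le_mul_of_nonneg_right _ (Real.rpow_nonneg hr.le _)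
        calc ((1:ℝ) / 4) ^ (δ - 2) ≤ (1 / 4) ^ (-2 : ℝ) :=
              Real.rpow_le_rpow_of_exponent_ge (by norm_num) (by norm_num) (by linarith)
          _ = 16 := by rw [Real.rpow_neg (by norm_num)]; norm_num

theorem lemC {v : ℂ → ℝ} {R δ M : ℝ} (hR : 0 < R) (h0 : 0 < δ) (h1 : δ < 1)
    (hv : Hyp v R δ M) (hM0 : 0 ≤ M) :
    ∃ D, 0 ≤ D ∧ ∀ z : ℂ, ‖z‖ ≤ R → |v z - v 0| ≤ D * ‖z‖ ^ δ := by
  obtain ⟨C, hC, H⟩ := SD hR h0 (by linarith) hv hM0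
  obtain ⟨K0, hK0⟩ := (isCompact_closedBall (0:ℂ) R).exists_bound_of_continuousOn hv.1
  have hK00 : 0 ≤ K0 := (norm_nonneg _).trans (hK0 0 (by simp [hR.le]))
  set θ : ℝ := (1 / 2 : ℝ) ^ δ
  have hθ : 1 / 2 < θ := by
    have : (1 / 2 : ℝ) ^ (1 : ℝ) < (1 / 2) ^ δ :=
      Real.rpow_lt_rpow_of_exponent_gt (by norm_num) (by norm_num) h1
    rw [Real.rpow_one] at this
    exact this
  have hRδ : 0 < (R / 2) ^ δ := Real.rpow_pos_of_pos (by positivity) _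
  have hθ' : 0 < θ - 1 / 2 := by linarith
  set D := C / (θ - 1 / 2) + 2 * K0 / (R / 2) ^ δ
  have hD1 : C ≤ D * (θ - 1 / 2) := by
    have : D * (θ - 1 / 2) = C + 2 * K0 / (R / 2) ^ δ * (θ - 1 / 2) := by
      simp only [D]; rw [add_mul, div_mul_cancel₀ _ hθ'.ne']
    rw [this]; have : 0 ≤ 2 * K0 / (R / 2) ^ δ * (θ - 1 / 2) := by positivity
    linarith
  have hD2 : 2 * K0 ≤ D * (R / 2) ^ δ := by
    have : D * (R / 2) ^ δ = C / (θ - 1 / 2) * (R / 2) ^ δ + 2 * K0 := by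
      simp only [D]; field_simp
    rw [this]; have : 0 ≤ C / (θ - 1 / 2) * (R / 2) ^ δ := by positivity
    linarith
  have hD : 0 ≤ D := by positivity
  have step : ∀ w : ℂ, ‖w‖ ≤ R → |v w - v 0| ≤ D * ‖w‖ ^ δ → |v (w / 2) - v 0| ≤ D * ‖w / 2‖ ^ δ := by
    intro w hw hb
    have hw2 : ‖w / 2‖ = (1 / 2) * ‖w‖ := by simp; ring
    have b1 := H (w / 2) (w / 2) (by rw [hw2]; linarith) (by rw [hw2]; linarith)
    rw [add_halves, sub_self] at b1
    have e : ‖w / 2‖ ^ δ = θ * ‖w‖ ^ δ := by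
      rw [hw2, Real.mul_rpow (by norm_num) (norm_nonneg _)]
    have e2 : ‖w / 2‖ ^ δ ≤ ‖w‖ ^ δ := 
      Real.rpow_le_rpow (norm_nonneg _) (by rw [hw2]; linarith [norm_nonneg w]) h0.le
    have b2 : C * (‖w / 2‖ ^ δ + ‖w / 2‖ ^ δ) ≤ C * (‖w‖ ^ δ + ‖w‖ ^ δ) := by gcongr
    rw [e]
    have nn := Real.rpow_nonneg (norm_nonneg w) δ
    have b3 := mul_le_mul_of_nonneg_right hD1 nn
    rw [abs_le] at *
    constructor <;> linarith [b1.1, b1.2, hb.1, hb.2]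
  have ind : ∀ k : ℕ, ∀ z : ℂ, R / 2 ≤ ‖z‖ → ‖z‖ ≤ R →
      |v (z / 2 ^ k) - v 0| ≤ D * ‖z / 2 ^ k‖ ^ δ := by
    intro k
    induction k with
    | zero =>
      intro z hz1 hz2
      simp only [pow_zero, div_one]
      have a1 := abs_le.1 (hK0 z (mem_closedBall_zero_iff.2 hz2))
      have a2 := abs_le.1 (hK0 0 (by simp [hR.le]))
      have : D * (R / 2) ^ δ ≤ D * ‖z‖ ^ δ :=
        mul_le_mul_of_nonneg_left (Real.rpow_le_rpow (by positivity) hz1 h0.le) hD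
      rw [abs_le]; constructor <;> linarith [a1.1, a1.2, a2.1, a2.2]
    | succ k ih =>
      intro z hz1 hz2
      have hle : ‖z / 2 ^ k‖ ≤ R := by
        rw [norm_div, norm_pow, Complex.norm_ofNat]
        exact (div_le_self (norm_nonneg _) (one_le_pow₀ (by norm_num))).trans hz2
      have := step (z / 2 ^ k) hle (ih z hz1 hz2)
      rwa [div_div, ← pow_succ] at this
  refine ⟨D, hD, fun z hz => ?_⟩
  rcases eq_or_ne z 0 with rfl | hne
  · simp [Real.zero_rpow h0.ne']
  obtain ⟨k, hk1, hk2⟩ := dyadic (norm_pos_iff.2 hne) hz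
  have e : ‖(2:ℂ) ^ k * z‖ = 2 ^ k * ‖z‖ := by simp
  have := ind k (2 ^ k * z) (by rw [e]; exact hk1) (by rw [e]; exact hk2)
  rwa [mul_div_cancel_left₀ _ (pow_ne_zero k two_ne_zero)] at this

theorem gradC {v : ℂ → ℝ} {R δ M : ℝ} (hR : 0 < R) (h0 : 0 < δ) (h1 : δ < 1)
    (hv : Hyp v R δ M) (hM0 : 0 ≤ M) {c : ℂ} (hc : ‖c‖ = 1) :
    ∃ C, 0 ≤ C ∧ ∀ z : ℂ, z ≠ 0 → ‖z‖ ≤ R / 2 → |fderiv ℝ v z c| ≤ C * ‖z‖ ^ (δ - 1) := by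
  obtain ⟨D, hD, H⟩ := lemC hR h0 h1 hv hM0
  refine ⟨32 * D + 4 * (M + 1), by positivity, fun z hz hzR => ?_⟩
  set r := ‖z‖
  have hr : 0 < r := norm_pos_iff.2 hz
  have e1 : r ^ δ = r ^ (δ - 1) * r := by
    rw [← Real.rpow_add_one hr.ne']; congr 1; ring
  have e2 : r ^ (δ - 1) = r ^ (δ - 2) * r := by
    rw [← Real.rpow_add_one hr.ne']; congr 1; ring
  have hpos : 0 < r ^ (δ - 2) := Real.rpow_pos_of_pos hr _
  have := GE (f := fun w => v w - v 0) (d := r / 4) (K := D * (4 * r ^ δ))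
    (M := (M + 1) * (16 * r ^ (δ - 2))) (z0 := z) hc (by positivity) (by positivity) (by
      intro w hw
      have n1 : r / 2 ≤ ‖w‖ := by
        have := norm_sub_norm_le z w
        rw [norm_sub_rev] at this
        linarith
      have n2 : ‖w‖ ≤ 3 / 2 * r := by
        have := norm_sub_norm_le w z
        linarith
      have hw0 : w ≠ 0 := norm_pos_iff.1 (by linarith)
      obtain ⟨b1, b2⟩ := half_rpow h0 (by linarith) hr (t := ‖w‖) (by linarith) (by linarith)
      refine ⟨(H w (by linarith)).trans (mul_le_mul_of_nonneg_left b1 hD), ?_⟩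
      obtain ⟨l, hl, hl'⟩ := hv.2 w hw0 (by linarith)
      refine ⟨l - 0, ?_, hl'.sub (HL.const _ _)⟩
      rw [sub_zero]
      refine hl.trans (mul_le_mul (by linarith) b2 (Real.rpow_nonneg (norm_nonneg _) _) (by linarith)))
  rw [fderiv_sub_const] at this
  refine this.trans (le_of_eq ?_)
  rw [e1, e2]
  field_simp
  ring

theorem lemA {v : ℂ → ℝ} {R δ M : ℝ} (hR : 0 < R) (h0 : 0 < δ) (h2 : δ < 2)
    (hv : Hyp v R δ M) (hM0 : 0 ≤ M) {c : ℂ} (hc : ‖c‖ = 1) :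
    ∃ C, 0 ≤ C ∧ ∀ (r : ℝ) (z z' : ℂ), 0 < r → r ≤ R / 4 → r / 2 ≤ ‖z‖ → ‖z‖ ≤ r →
      r / 2 ≤ ‖z'‖ → ‖z'‖ ≤ r → |fderiv ℝ v z c - fderiv ℝ v z' c| ≤ C * r ^ (δ - 1) := by
  obtain ⟨C, hC, H⟩ := SD hR h0 h2 hv hM0
  refine ⟨128 * C + 4 * (M + 1), by positivity, fun r z z' hr hrR hz1 hz2 hz1' hz2' => ?_⟩
  have e1 : r ^ δ = r ^ (δ - 1) * r := by
    rw [← Real.rpow_add_one hr.ne']; congr 1; ring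
  have e2 : r ^ (δ - 1) = r ^ (δ - 2) * r := by
    rw [← Real.rpow_add_one hr.ne']; congr 1; ring
  have hpos : 0 < r ^ (δ - 2) := Real.rpow_pos_of_pos hr _
  set p : ℂ → ℝ := fun h => v (z + 1 * h) + v (z' + (-1) * h) - 2 * v ((z + z') / 2)
  have hn1 : ‖(-1 : ℂ)‖ = 1 := by simp
  have hloc : ∀ z b h : ℂ, r / 2 ≤ ‖z‖ → ‖z‖ ≤ r → ‖b‖ = 1 → ‖h‖ ≤ r / 4 →
      ∃ l, |l| ≤ M * (16 * r ^ (δ - 2)) ∧ HL (fun h => v (z + b * h)) h l := by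
    intro z b h hz1 hz2 hb hh
    have nb : ‖b * h‖ = ‖h‖ := by rw [norm_mul, hb, one_mul]
    have n1 : r / 4 ≤ ‖z + b * h‖ := by
      have := norm_sub_le (z + b * h) (b * h)
      rw [add_sub_cancel_right, nb] at this
      linarith
    have n2 : ‖z + b * h‖ ≤ 2 * r := by
      have := norm_add_le z (b * h)
      rw [nb] at this; linarith
    obtain ⟨b1, b2⟩ := half_rpow h0 h2 hr n1 n2
    obtain ⟨l, hl, hl'⟩ := hv.2 (z + b * h) (norm_pos_iff.1 (by linarith)) (by linarith)
    exact ⟨l, hl.trans (mul_le_mul_of_nonneg_left b2 hM0), hl'.comp_aff hb⟩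
  have := GE (f := p) (d := r / 8) (K := C * (4 * r ^ δ + 4 * r ^ δ))
    (M := 2 * (M + 1) * (16 * r ^ (δ - 2))) (z0 := 0) hc (by positivity) (by positivity) (by
      intro h hh
      rw [sub_zero] at hh
      have hh' : ‖h‖ ≤ r / 4 := by linarith
      constructor
      · have na : ‖(z + z') / 2‖ ≤ r := by
          have := norm_add_le z z'
          rw [norm_div, Complex.norm_ofNat]; linarith
        have nh : ‖(z - z') / 2 + h‖ ≤ 5 / 4 * r := by
          have h1 := norm_sub_le z z'
          have h3 := norm_add_le ((z - z') / 2) h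
          rw [norm_div, Complex.norm_ofNat] at h3; linarith
        have b := H ((z + z') / 2) ((z - z') / 2 + h) (by linarith) (by linarith)
        have q1 : ‖(z + z') / 2‖ ^ δ ≤ 4 * r ^ δ := 
          (Real.rpow_le_rpow (norm_nonneg _) na h0.le).trans
            (by linarith [Real.rpow_nonneg hr.le δ])
        have q2 : ‖(z - z') / 2 + h‖ ^ δ ≤ 4 * r ^ δ :=
          (Real.rpow_le_rpow (norm_nonneg _) nh h0.le).trans
            (half_rpow h0 h2 hr (by linarith) (by linarith)).1
        have s1 : (z + z') / 2 + ((z - z') / 2 + h) = z + 1 * h := by ring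
        have s2 : (z + z') / 2 - ((z - z') / 2 + h) = z' + (-1) * h := by ring
        rw [s1, s2] at b
        exact b.trans (mul_le_mul_of_nonneg_left (add_le_add q2 q1) hC)
      · obtain ⟨l1, a1, b1⟩ := hloc z 1 h hz1 hz2 (by simp) hh'
        obtain ⟨l2, a2, b2⟩ := hloc z' (-1) h hz1' hz2' hn1 hh'
        refine ⟨l1 + l2 - 0, ?_, (b1.add b2).sub (HL.const _ _)⟩
        have := abs_add_le l1 l2
        rw [sub_zero]
        linarith)
  have hder : fderiv ℝ p 0 c = fderiv ℝ v z c - fderiv ℝ v z' c := by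
    have hd : ∀ z b : ℂ, r / 2 ≤ ‖z‖ → ‖z‖ ≤ r →
        HasFDerivAt (fun h => v (z + b * h)) ((fderiv ℝ v z).comp
          ((ContinuousLinearMap.toSpanSingleton ℂ b).restrictScalars ℝ)) 0 := by
      intro z b hz1 hz2
      have h1 : HasDerivAt (fun w => z + b * w) b 0 := by
        simpa using ((hasDerivAt_id (0 : ℂ)).const_mul b).const_add z
      have h2 := h1.hasFDerivAt.restrictScalars ℝ
      obtain ⟨l, _, hl⟩ := hv.2 z (norm_pos_iff.1 (by linarith)) (by linarith)
      have h3 : HasFDerivAt v (fderiv ℝ v z) (z + b * 0) := by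
        simpa using (cd_diff hl.1).hasFDerivAt
      exact h3.comp (0 : ℂ) h2
    have h5 : fderiv ℝ p 0 = _ := (((hd z 1 hz1 hz2).add (hd z' (-1) hz1' hz2')).sub_const
      (2 * v ((z + z') / 2))).fderiv
    rw [h5]
    simp [sub_eq_add_neg]
  rw [hder] at this
  refine this.trans (le_of_eq ?_)
  rw [e1, e2]
  field_simp
  ring

theorem gradA {v : ℂ → ℝ} {R δ M : ℝ} (hR : 0 < R) (h1 : 1 < δ) (h2 : δ < 2)
    (hv : Hyp v R δ M) (hM0 : 0 ≤ M) {c : ℂ} (hc : ‖c‖ = 1) :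
    ∃ L C, 0 ≤ C ∧ ∀ z : ℂ, z ≠ 0 → ‖z‖ ≤ R / 4 → |fderiv ℝ v z c - L| ≤ C * ‖z‖ ^ (δ - 1) := by
  obtain ⟨C, hC, H⟩ := lemA hR (by linarith) h2 hv hM0 hc
  set r0 := R / 4
  have hr0 : 0 < r0 := by positivity
  set θ : ℝ := (1 / 2 : ℝ) ^ (δ - 1)
  have hθ0 : 0 < θ := Real.rpow_pos_of_pos (by norm_num) _
  have hθ1 : θ < 1 := Real.rpow_lt_one (by norm_num) (by norm_num) (by linarith)
  have hpow : ∀ k : ℕ, (r0 / 2 ^ k) ^ (δ - 1) = r0 ^ (δ - 1) * θ ^ k := by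
    intro k
    have : r0 / 2 ^ k = r0 * (1 / 2) ^ k := by rw [one_div, inv_pow]; rfl
    rw [this, Real.mul_rpow hr0.le (by positivity)]
    simp only [θ]
    rw [← Real.rpow_natCast, ← Real.rpow_mul (by norm_num), mul_comm (k : ℝ),
      Real.rpow_mul (by norm_num), Real.rpow_natCast]
  set s : ℕ → ℝ := fun k => fderiv ℝ v ((r0 / 2 ^ k : ℝ) : ℂ) c
  have hnorm : ∀ k : ℕ, ‖((r0 / 2 ^ k : ℝ) : ℂ)‖ = r0 / 2 ^ k := by
    intro k; rw [Complex.norm_real, Real.norm_of_nonneg (by positivity)]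
  have hle : ∀ k : ℕ, r0 / 2 ^ k ≤ r0 := fun k => div_le_self hr0.le (one_le_pow₀ (by norm_num))
  have hs : ∀ k, dist (s k) (s (k + 1)) ≤ (C * r0 ^ (δ - 1)) * θ ^ k := by
    intro k
    have hp : 0 < r0 / 2 ^ k := by positivity
    have e : r0 / 2 ^ (k + 1) = r0 / 2 ^ k / 2 := by
      rw [pow_succ, div_div r0 (2 ^ k) 2]
    have := H (r0 / 2 ^ k) ((r0 / 2 ^ k : ℝ) : ℂ) ((r0 / 2 ^ (k+1) : ℝ) : ℂ) hp (hle k)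
      (by rw [hnorm]; linarith) (by rw [hnorm]) (by rw [hnorm, e]) (by rw [hnorm, e]; linarith)
    rw [hpow, ← mul_assoc] at this
    exact this
  obtain ⟨L, hL⟩ := cauchySeq_tendsto_of_complete (cauchySeq_of_le_geometric θ _ hθ1 hs)
  have hsL := dist_le_of_le_geometric_of_tendsto θ _ hθ1 hs hL
  have hθ2 : 0 < 1 - θ := by linarith
  refine ⟨L, 2 * (C + C / (1 - θ)), by positivity, fun z hz hzr => ?_⟩
  obtain ⟨k, hk1, hk2⟩ := dyadic (norm_pos_iff.2 hz) hzr
  have h2k : (0:ℝ) < 2 ^ k := by positivity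
  have hp : 0 < r0 / 2 ^ k := by positivity
  have z1 : r0 / 2 ^ k / 2 ≤ ‖z‖ := by
    rw [div_div, div_le_iff₀ (by positivity)]; linarith
  have z2 : ‖z‖ ≤ r0 / 2 ^ k := by
    rw [le_div_iff₀ h2k]; linarith
  have b1 := H (r0 / 2 ^ k) z ((r0 / 2 ^ k : ℝ) : ℂ) hp (hle k) z1 z2 (by rw [hnorm]; linarith)
    (by rw [hnorm])
  have b2 := hsL k
  have e3 : C * r0 ^ (δ - 1) * θ ^ k / (1 - θ) = C / (1 - θ) * (r0 / 2 ^ k) ^ (δ - 1) := by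
    rw [hpow]; ring
  rw [e3, Real.dist_eq] at b2
  have b3 : (r0 / 2 ^ k) ^ (δ - 1) ≤ 2 * ‖z‖ ^ (δ - 1) := by
    calc (r0 / 2 ^ k) ^ (δ - 1) ≤ (2 * ‖z‖) ^ (δ - 1) :=
          Real.rpow_le_rpow hp.le (by linarith) (by linarith)
      _ = 2 ^ (δ - 1) * ‖z‖ ^ (δ - 1) := Real.mul_rpow (by norm_num) (norm_nonneg _)
      _ ≤ 2 * ‖z‖ ^ (δ - 1) := by
        apply mul_le_mul_of_nonneg_right _ (Real.rpow_nonneg (norm_nonneg _) _)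
        calc (2:ℝ) ^ (δ - 1) ≤ 2 ^ (1:ℝ) :=
              Real.rpow_le_rpow_of_exponent_le (by norm_num) (by linarith)
          _ = 2 := by norm_num
  calc |fderiv ℝ v z c - L| ≤ |fderiv ℝ v z c - s k| + |s k - L| := abs_sub_le _ _ _
    _ ≤ C * (r0 / 2 ^ k) ^ (δ - 1) + C / (1 - θ) * (r0 / 2 ^ k) ^ (δ - 1) := add_le_add b1 b2
    _ = (C + C / (1 - θ)) * (r0 / 2 ^ k) ^ (δ - 1) := by ring
    _ ≤ (C + C / (1 - θ)) * (2 * ‖z‖ ^ (δ - 1)) :=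
        mul_le_mul_of_nonneg_left b3 (by positivity)
    _ = _ := by ring

open Complex Real Set Topology Filter Asymptotics

theorem pd_eq {f : ℂ → ℝ} {z : ℂ} (hf : DifferentiableAt ℝ f z) :
    pdx f z = fderiv ℝ f z 1 ∧ pdy f z = fderiv ℝ f z Complex.I := by
  constructor
  · have h1 : HasDerivAt (fun t : ℝ => z + (t : ℂ)) 1 0 :=
      (Complex.ofRealCLM.hasDerivAt (x := 0)).const_add z
    have h2 : HasFDerivAt f (fderiv ℝ f z) (z + ((0 : ℝ) : ℂ)) := by
      rw [Complex.ofReal_zero, add_zero]; exact hf.hasFDerivAt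
    exact (h2.comp_hasDerivAt (0 : ℝ) h1).deriv
  · have h1 : HasDerivAt (fun t : ℝ => z + (t : ℂ) * Complex.I) (1 * Complex.I) 0 :=
      ((Complex.ofRealCLM.hasDerivAt (x := 0)).mul_const Complex.I).const_add z
    have h2 : HasFDerivAt f (fderiv ℝ f z) (z + ((0 : ℝ) : ℂ) * Complex.I) := by
      rw [Complex.ofReal_zero, zero_mul, add_zero]; exact hf.hasFDerivAt
    have := (h2.comp_hasDerivAt (0 : ℝ) h1).deriv
    rw [one_mul] at this
    exact this

theorem HL_lap {u : ℂ → ℝ} {z : ℂ} (h : ContDiffAt ℝ 2 u z) : HL u z (lap u z) := by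
  refine ⟨h, ?_⟩
  have hx : pdx u =ᶠ[𝓝 z] fun w => fderiv ℝ u w 1 := by
    filter_upwards [cd_ev h] with w hw using (pd_eq (cd_diff hw)).1
  have hy : pdy u =ᶠ[𝓝 z] fun w => fderiv ℝ u w Complex.I := by
    filter_upwards [cd_ev h] with w hw using (pd_eq (cd_diff hw)).2
  have hd : ∀ c : ℂ, HasFDerivAt (fun w => fderiv ℝ u w c)
      ((fderiv ℝ (fderiv ℝ u) z).flip c) z := by
    intro c
    have := (cd_fderiv h).hasFDerivAt.clm_apply (hasFDerivAt_const c z)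
    simpa using this
  have hx' := (hd 1).congr_of_eventuallyEq hx
  have hy' := (hd Complex.I).congr_of_eventuallyEq hy
  rw [lap, (pd_eq hx'.differentiableAt).1, (pd_eq hy'.differentiableAt).2, hx'.fderiv, hy'.fderiv]
  simp

theorem isOpen_PDisc : IsOpen PDisc :=
  (isOpen_lt continuous_const continuous_norm).inter (isOpen_lt continuous_norm continuous_const)

theorem setup (Ξ₀ G : ℂ → ℂ) (n : ℤ)
    (hGhol : DifferentiableOn ℂ G (Metric.ball (0 : ℂ) 1))
    (hG0 : G 0 ≠ 0)
    (hord : ∀ z ∈ PDisc, Ξ₀ z = z ^ n * G z)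
    (u : ℂ → ℝ) (hu : ContDiffOn ℝ 2 u PDisc)
    (hpde : ∀ z ∈ PDisc, lap u z = 16 * ‖Ξ₀ z‖ ^ 2 * Real.exp (2 * u z))
    (T V : ℂ → ℝ) (hV : ContinuousOn V (Metric.ball (0 : ℂ) 1))
    (hVT : ∀ z ∈ PDisc, V z = u z + T z) :
    ∃ r0 : ℝ, 0 < r0 ∧ r0 ≤ 1 / 2 ∧ ∃ ψ g : ℂ → ℝ,
      ContinuousOn ψ (Metric.closedBall 0 r0) ∧ (∀ z, ‖z‖ ≤ r0 → HL g z 0) ∧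
      ∀ z, z ≠ 0 → ‖z‖ ≤ r0 → ∀ m, HL T z m →
        HL ψ z (Real.exp (2 * ψ z - 2 * T z) * ‖z‖ ^ (2 * n : ℝ) + m) ∧
        DifferentiableAt ℝ (fun w => u w + T w) z ∧
        ∀ c, fderiv ℝ (fun w => u w + T w) z c = fderiv ℝ ψ z c - fderiv ℝ g z c := by
  have hGc : ContinuousAt G 0 :=
    (hGhol.continuousOn).continuousAt (Metric.isOpen_ball.mem_nhds (by simp))
  obtain ⟨ε, hε, hεG⟩ := Metric.eventually_nhds_iff_ball.1 (hGc.eventually_ne hG0)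
  set r0 := min (ε / 2) (1 / 2)
  have hr0 : 0 < r0 := by positivity
  have hr1 : r0 ≤ 1 / 2 := min_le_right _ _
  have hGne : ∀ z : ℂ, ‖z‖ ≤ r0 → G z ≠ 0 := fun z hz => hεG z (by
    rw [mem_ball_zero_iff]; have : r0 ≤ ε / 2 := min_le_left _ _; linarith)
  set g : ℂ → ℝ := fun z => Real.log 4 + Real.log ‖G z‖
  have hg : ∀ z, ‖z‖ ≤ r0 → HL g z 0 := by
    intro z hz
    have ha : AnalyticAt ℂ G z :=
      hGhol.analyticAt (Metric.isOpen_ball.mem_nhds (by rw [mem_ball_zero_iff]; linarith))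
    have := (HL.const (Real.log 4) z).add (HL.harm (ha.harmonicAt_log_norm (hGne z hz)))
    exact this.of_eq (by ring)
  refine ⟨r0, hr0, hr1, fun z => V z + g z, g, ?_, hg, ?_⟩
  · apply (hV.mono _).add
    · intro z hz
      exact (hg z (mem_closedBall_zero_iff.1 hz)).1.continuousAt.continuousWithinAt
    · exact Metric.closedBall_subset_ball (by linarith)
  · intro z hz hzr m hm
    have hzP : z ∈ PDisc := ⟨norm_pos_iff.2 hz, by linarith⟩
    have hzp : 0 < ‖z‖ := norm_pos_iff.2 hz
    have hul : HL u z (lap u z) := HL_lap (hu.contDiffAt (isOpen_PDisc.mem_nhds hzP))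
    have hVe : V =ᶠ[𝓝 z] fun w => u w + T w := by
      filter_upwards [isOpen_PDisc.mem_nhds hzP] with w hw using hVT w hw
    have huT := hul.add hm
    have hVl := huT.congr hVe
    refine ⟨(hVl.add (hg z hzr)).of_eq ?_, cd_diff huT.1, fun c => ?_⟩
    · rw [hpde z hzP, hord z hzP]
      have e1 : 2 * (V z + g z) - 2 * T z =
          2 * u z + (Real.log 4 + Real.log 4) + (Real.log ‖G z‖ + Real.log ‖G z‖) := by
        rw [hVT z hzP]; simp only [g]; ring
      have hGp : 0 < ‖G z‖ := norm_pos_iff.2 (hGne z hzr)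
      simp only []
      rw [e1, Real.exp_add, Real.exp_add, Real.exp_add, Real.exp_add, Real.exp_log (by norm_num),
        Real.exp_log hGp, norm_mul, norm_zpow]
      have e2 : ‖z‖ ^ (2 * n : ℝ) = (‖z‖ ^ n) ^ 2 := by
        rw [mul_comm, Real.rpow_mul hzp.le, Real.rpow_intCast]; norm_num
      rw [e2]; ring
    · have h1 : fderiv ℝ (fun w => V w + g w) z = fderiv ℝ V z + fderiv ℝ g z :=
        fderiv_add (cd_diff hVl.1) (cd_diff (hg z hzr).1)
      rw [h1, hVe.fderiv_eq]; simp

theorem near0 {r : ℝ} (hr : 0 < r) : ∀ᶠ z in 𝓝[PDisc] (0:ℂ), z ≠ 0 ∧ ‖z‖ ≤ r := by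
  have h1 : ∀ᶠ z in 𝓝[PDisc] (0:ℂ), z ∈ PDisc := self_mem_nhdsWithin
  have h2 : ∀ᶠ z in 𝓝[PDisc] (0:ℂ), z ∈ Metric.ball (0:ℂ) r :=
    nhdsWithin_le_nhds (Metric.ball_mem_nhds _ hr)
  filter_upwards [h1, h2] with z hz hz2
  exact ⟨norm_pos_iff.1 hz.1, (mem_ball_zero_iff.1 hz2).le⟩

theorem exp_lip {a b B : ℝ} (ha : a ≤ B) (hb : b ≤ B) :
    |Real.exp a - Real.exp b| ≤ Real.exp B * |a - b| := by
  have key : ∀ a b : ℝ, a ≤ B → Real.exp a - Real.exp b ≤ Real.exp B * |a - b| := by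
    intro a b ha
    have h1 := Real.add_one_le_exp (b - a)
    have h2 : Real.exp b = Real.exp a * Real.exp (b - a) := by rw [← Real.exp_add]; congr 1; ring
    have h3 : Real.exp a - Real.exp b ≤ Real.exp a * (a - b) := by
      rw [h2]; nlinarith [Real.exp_pos a]
    calc _ ≤ _ := h3
      _ ≤ Real.exp a * |a - b| := mul_le_mul_of_nonneg_left (le_abs_self _) (Real.exp_pos _).le
      _ ≤ _ := mul_le_mul_of_nonneg_right (Real.exp_le_exp.2 ha) (abs_nonneg _)
  rw [abs_le]
  refine ⟨?_, key a b ha⟩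
  have := key b a hb
  rw [abs_sub_comm] at this
  linarith

/-- The conical equation. -/
def Cone (ψ : ℂ → ℝ) (r0 δ : ℝ) : Prop :=
  ContinuousOn ψ (Metric.closedBall 0 r0) ∧
    ∀ z, z ≠ 0 → ‖z‖ ≤ r0 → HL ψ z (Real.exp (2 * ψ z) * ‖z‖ ^ (δ - 2))

theorem Cone.hyp {ψ : ℂ → ℝ} {r0 δ δ' : ℝ} (h : Cone ψ r0 δ) (hδ : δ' ≤ δ) (hr1 : r0 ≤ 1 / 2) :
    ∃ M, 0 ≤ M ∧ Hyp ψ r0 δ' M := by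
  obtain ⟨K0, hK0⟩ := (isCompact_closedBall (0:ℂ) r0).exists_bound_of_continuousOn h.1
  refine ⟨Real.exp (2 * K0), (Real.exp_pos _).le, h.1, fun z hz hzr => ?_⟩
  refine ⟨_, ?_, h.2 z hz hzr.le⟩
  have hzp : 0 < ‖z‖ := norm_pos_iff.2 hz
  rw [abs_of_nonneg (mul_nonneg (Real.exp_pos _).le (Real.rpow_nonneg hzp.le _))]
  have h1 := (abs_le.1 (hK0 z (mem_closedBall_zero_iff.2 hzr.le))).2
  apply mul_le_mul (Real.exp_le_exp.2 (by linarith)) _ (Real.rpow_nonneg hzp.le _) (Real.exp_pos _).le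
  exact Real.rpow_le_rpow_of_exponent_ge hzp (by linarith) (by linarith)

theorem coneA {ψ : ℂ → ℝ} {r0 δ : ℝ} (hr0 : 0 < r0) (hr1 : r0 ≤ 1 / 2) (h : Cone ψ r0 δ)
    (hδ : 1 < δ) {c : ℂ} (hc : ‖c‖ = 1) :
    ∃ L, Tendsto (fun z => fderiv ℝ ψ z c) (𝓝[PDisc] 0) (𝓝 L) := by
  set δ' := min δ (3 / 2)
  have h1 : 1 < δ' := lt_min hδ (by norm_num)
  have h2 : δ' < 2 := (min_le_right _ _).trans_lt (by norm_num)
  obtain ⟨M, hM, hyp⟩ := h.hyp (min_le_left δ (3 / 2)) hr1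
  obtain ⟨L, C, hC, H⟩ := gradA hr0 h1 h2 hyp hM hc
  refine ⟨L, ?_⟩
  rw [tendsto_iff_norm_sub_tendsto_zero]
  have ht : Tendsto (fun z : ℂ => C * ‖z‖ ^ (δ' - 1)) (𝓝[PDisc] 0) (𝓝 0) := by
    have : ContinuousAt (fun w : ℂ => C * ‖w‖ ^ (δ' - 1)) 0 :=
      continuousAt_const.mul (continuous_norm.continuousAt.rpow_const (Or.inr (by linarith)))
    have h3 : Tendsto (fun w : ℂ => C * ‖w‖ ^ (δ' - 1)) (𝓝 0) (𝓝 0) := by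
      have := this.tendsto
      rw [norm_zero, Real.zero_rpow (by linarith), mul_zero] at this
      exact this
    exact h3.mono_left nhdsWithin_le_nhds
  refine squeeze_zero' (Eventually.of_forall fun _ => norm_nonneg _) ?_ ht
  filter_upwards [near0 (show 0 < r0 / 4 by positivity)] with z hz
  exact H z hz.1 hz.2

theorem coneC {ψ : ℂ → ℝ} {r0 δ : ℝ} (hr0 : 0 < r0) (hr1 : r0 ≤ 1 / 2) (h : Cone ψ r0 δ)
    (hδ0 : 0 < δ) (hδ : δ < 1) {c : ℂ} (hc : ‖c‖ = 1) :
    (fun z => fderiv ℝ ψ z c) =O[𝓝[PDisc] 0] (fun z => ‖z‖ ^ (δ - 1)) := by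
  obtain ⟨M, hM, hyp⟩ := h.hyp le_rfl hr1
  obtain ⟨C, hC, H⟩ := gradC hr0 hδ0 hδ hyp hM hc
  refine IsBigO.of_bound C ?_
  filter_upwards [near0 (show 0 < r0 / 2 by positivity)] with z hz
  rw [Real.norm_of_nonneg (Real.rpow_nonneg (norm_nonneg _) _)]
  exact H z hz.1 hz.2

theorem coneB {ψ : ℂ → ℝ} {r0 : ℝ} (hr0 : 0 < r0) (hr1 : r0 ≤ 1 / 2) (h : Cone ψ r0 1)
    {c : ℂ} (hc : ‖c‖ = 1) :
    ∃ C, ∀ᶠ z in 𝓝[PDisc] 0, |fderiv ℝ ψ z c| ≤ C := by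
  obtain ⟨M, hM, hyp⟩ := h.hyp (δ' := 1 / 2) (by norm_num) hr1
  obtain ⟨D, hD, HD⟩ := lemC hr0 (by norm_num) (by norm_num) hyp hM
  obtain ⟨K0, hK0⟩ := (isCompact_closedBall (0:ℂ) r0).exists_bound_of_continuousOn h.1
  set A := Real.exp (2 * ψ 0)
  have hA : 0 < A := Real.exp_pos _
  set v : ℂ → ℝ := fun z => ψ z - A * ‖z‖ ^ (1:ℝ)
  have hv : Hyp v r0 (3 / 2) (2 * Real.exp (2 * K0) * D) := by
    constructor
    · apply h.1.sub
      exact (continuous_const.mul (continuous_norm.rpow_const fun _ => Or.inr zero_le_one)).continuousOn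
    · intro z hz hzr
      have hzp : 0 < ‖z‖ := norm_pos_iff.2 hz
      have h1 := (HL.rpow_norm hz 1).const_mul A
      simp only [sub_zero] at h1
      refine ⟨_, ?_, (h.2 z hz hzr.le).sub h1⟩
      have e1 : Real.exp (2 * ψ z) * ‖z‖ ^ ((1:ℝ) - 2) - A * (1 ^ 2 * ‖z‖ ^ ((1:ℝ) - 2)) =
          (Real.exp (2 * ψ z) - A) * ‖z‖ ^ ((1:ℝ) - 2) := by ring
      rw [e1, abs_mul, abs_of_nonneg (Real.rpow_nonneg hzp.le _)]
      have b1 : 2 * ψ z ≤ 2 * K0 := by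
        linarith [(abs_le.1 (hK0 z (mem_closedBall_zero_iff.2 hzr.le))).2]
      have b2 : 2 * ψ 0 ≤ 2 * K0 := by
        linarith [(abs_le.1 (hK0 0 (by simp [hr0.le]))).2]
      have b3 := exp_lip b1 b2
      have b4 : |2 * ψ z - 2 * ψ 0| = 2 * |ψ z - ψ 0| := by
        rw [← mul_sub, abs_mul]; norm_num
      rw [b4] at b3
      have b5 : |Real.exp (2 * ψ z) - A| ≤ 2 * Real.exp (2 * K0) * D * ‖z‖ ^ (1 / 2 : ℝ) := by
        calc _ ≤ _ := b3
          _ ≤ Real.exp (2 * K0) * (2 * (D * ‖z‖ ^ (1 / 2 : ℝ))) := by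
            gcongr; exact HD z hzr.le
          _ = _ := by ring
      calc _ ≤ 2 * Real.exp (2 * K0) * D * ‖z‖ ^ (1 / 2 : ℝ) * ‖z‖ ^ ((1:ℝ) - 2) :=
            mul_le_mul_of_nonneg_right b5 (Real.rpow_nonneg hzp.le _)
        _ = 2 * Real.exp (2 * K0) * D * ‖z‖ ^ ((3 / 2 : ℝ) - 2) := by
            rw [mul_assoc, ← Real.rpow_add hzp]; norm_num
  obtain ⟨L, C, hC, H⟩ := gradA hr0 (by norm_num) (by norm_num) hv (by positivity) hc
  refine ⟨|L| + C + A, ?_⟩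
  filter_upwards [near0 (show 0 < r0 / 4 by positivity)] with z hz
  have b := H z hz.1 hz.2
  have b' : C * ‖z‖ ^ ((3 / 2 : ℝ) - 1) ≤ C :=
    mul_le_of_le_one_right hC (Real.rpow_le_one (norm_nonneg _) (by linarith [hz.2]) (by norm_num))
  have hN : HasFDerivAt (fun w : ℂ => A * ‖w‖ ^ (1:ℝ)) (A • fderiv ℝ (fun w : ℂ => ‖w‖) z) z := by
    simp only [Real.rpow_one]
    have : DifferentiableAt ℝ (fun w : ℂ => ‖w‖) z := by
      have := (HL.rpow_norm hz.1 1).1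
      simp only [sub_zero, Real.rpow_one] at this
      exact cd_diff this
    exact this.hasFDerivAt.const_mul A
  have hψ : DifferentiableAt ℝ ψ z := cd_diff (h.2 z hz.1 (by linarith [hz.2])).1
  have e : fderiv ℝ v z = fderiv ℝ ψ z - A • fderiv ℝ (fun w : ℂ => ‖w‖) z :=
    (hψ.hasFDerivAt.sub hN).fderiv
  have hn : |fderiv ℝ (fun w : ℂ => ‖w‖) z c| ≤ 1 := by
    have h1 : ‖fderiv ℝ (fun w : ℂ => ‖w‖) z‖ ≤ 1 := by
      simpa using norm_fderiv_le_of_lipschitz ℝ (x₀ := z) (lipschitzWith_one_norm (E := ℂ))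
    have := (fderiv ℝ (fun w : ℂ => ‖w‖) z).le_opNorm c
    rw [hc, mul_one] at this
    exact this.trans h1
  have e' : fderiv ℝ v z c = fderiv ℝ ψ z c - A * fderiv ℝ (fun w : ℂ => ‖w‖) z c := by
    rw [e]; simp
  rw [e'] at b
  have hn' : |A * fderiv ℝ (fun w : ℂ => ‖w‖) z c| ≤ A := by
    rw [abs_mul, abs_of_pos hA]; exact mul_le_of_le_one_right hA.le hn
  rw [abs_le] at b hn' ⊢
  have l1 := le_abs_self L
  have l2 := neg_abs_le L
  constructor <;> linarith [b.1, b.2, hn'.1, hn'.2]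

open Complex Real Set Topology Filter Asymptotics

theorem HL.log_sub_log {z : ℂ} (hz : z ≠ 0) {a : ℝ} (ha : a - Real.log ‖z‖ ≠ 0) :
    HL (fun w => Real.log (a - Real.log ‖w‖)) z
      (-(((a - Real.log ‖z‖) ^ 2)⁻¹ * (‖z‖ ^ 2)⁻¹)) := by
  have h1 := HL.log_norm hz
  have h2 := grad_log_norm hz
  simp only [sub_zero] at h1 h2
  have hd : ∀ t : ℝ, a - t ≠ 0 → HasDerivAt (fun t => Real.log (a - t)) (-(a - t)⁻¹) t := by
    intro t ht
    have := ((hasDerivAt_id t).const_sub a).log ht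
    rw [neg_div, one_div] at this
    exact this
  have hφ : ContDiffAt ℝ 2 (fun t : ℝ => Real.log (a - t)) (Real.log ‖z‖) :=
    (contDiffAt_const.sub contDiffAt_id).log ha
  have h3 := h1.comp_real hφ
  have e1 : deriv (fun t : ℝ => Real.log (a - t)) =ᶠ[𝓝 (Real.log ‖z‖)] fun t => -(a - t)⁻¹ := by
    have : ∀ᶠ t in 𝓝 (Real.log ‖z‖), a - t ≠ 0 :=
      (continuousAt_const.sub continuousAt_id).eventually_ne ha
    filter_upwards [this] with t ht using (hd t ht).deriv
  have e2 : deriv (deriv (fun t : ℝ => Real.log (a - t))) (Real.log ‖z‖) =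
      -((a - Real.log ‖z‖) ^ 2)⁻¹ := by
    rw [e1.deriv_eq]
    have := (((hasDerivAt_id (Real.log ‖z‖)).const_sub a).inv ha).neg
    have h5 : deriv (fun t => -(a - t)⁻¹) (Real.log ‖z‖) = _ := this.deriv
    rw [h5]; simp
  rw [h2, e2] at h3
  exact h3.of_eq (by ring)

/-- The logarithmic equation. -/
def LogEq (ψ : ℂ → ℝ) (r0 : ℝ) : Prop :=
  ContinuousOn ψ (Metric.closedBall 0 r0) ∧
    ∀ z, z ≠ 0 → ‖z‖ ≤ r0 →
      HL ψ z ((Real.exp (2 * ψ z) - 1) * ((Real.log ‖z‖) ^ 2)⁻¹ * (‖z‖ ^ 2)⁻¹)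

noncomputable def chi (a : ℝ) (z : ℂ) : ℝ := Real.log (1 + a * (-Real.log ‖z‖)⁻¹)

theorem chi_facts {r0 a : ℝ} (hr0 : 0 < r0) (hr1 : r0 ≤ 1 / 2) (ha : 0 < -Real.log r0 + a) :
    ContinuousOn (chi a) (Metric.closedBall 0 r0) ∧
    ∀ z, z ≠ 0 → ‖z‖ ≤ r0 → 0 < -Real.log ‖z‖ ∧ 0 < a - Real.log ‖z‖ ∧
      Real.exp (chi a z) = (a - Real.log ‖z‖) * (-Real.log ‖z‖)⁻¹ ∧
      HL (chi a) z ((((Real.log ‖z‖) ^ 2)⁻¹ - ((a - Real.log ‖z‖) ^ 2)⁻¹) * (‖z‖ ^ 2)⁻¹) := by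
  have hL : ∀ z : ℂ, z ≠ 0 → ‖z‖ ≤ r0 → 0 < -Real.log ‖z‖ ∧ 0 < a - Real.log ‖z‖ := by
    intro z hz hzr
    have h1 := Real.log_le_log (norm_pos_iff.2 hz) hzr
    have h2 : Real.log r0 < 0 := Real.log_neg hr0 (by linarith)
    exact ⟨by linarith, by linarith⟩
  have main : ∀ z, z ≠ 0 → ‖z‖ ≤ r0 → 0 < -Real.log ‖z‖ ∧ 0 < a - Real.log ‖z‖ ∧
      Real.exp (chi a z) = (a - Real.log ‖z‖) * (-Real.log ‖z‖)⁻¹ ∧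
      HL (chi a) z ((((Real.log ‖z‖) ^ 2)⁻¹ - ((a - Real.log ‖z‖) ^ 2)⁻¹) * (‖z‖ ^ 2)⁻¹) := by
    intro z hz hzr
    obtain ⟨h1, h2⟩ := hL z hz hzr
    have e : ∀ t : ℝ, 0 < -t → 1 + a * (-t)⁻¹ = (a - t) * (-t)⁻¹ := by
      intro t ht
      have := mul_inv_cancel₀ ht.ne'
      rw [sub_eq_add_neg, add_mul, this]; ring
    refine ⟨h1, h2, ?_, ?_⟩
    · rw [chi, e _ h1, Real.exp_log (by positivity)]
    · have k1 := HL.log_sub_log hz h2.ne'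
      have k2 := HL.log_sub_log (a := 0) hz (by linarith)
      refine ((k1.sub k2).of_eq (by ring)).congr ?_
      have hc : ContinuousAt (fun w : ℂ => Real.log ‖w‖) z :=
        continuous_norm.continuousAt.log (norm_ne_zero_iff.2 hz)
      have v1 : ∀ᶠ w in 𝓝 z, 0 < -Real.log ‖w‖ := hc.neg.eventually (lt_mem_nhds h1)
      have v2 : ∀ᶠ w in 𝓝 z, 0 < a - Real.log ‖w‖ :=
        (continuousAt_const.sub hc).eventually (lt_mem_nhds h2)
      filter_upwards [v1, v2] with w w1 w2
      rw [chi, e _ w1, Real.log_mul w2.ne' (inv_ne_zero w1.ne'), Real.log_inv, zero_sub]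
      ring
  refine ⟨fun z hz => ?_, main⟩
  rcases eq_or_ne z 0 with rfl | hne
  · apply ContinuousAt.continuousWithinAt
    rw [continuousAt_iff_punctured_nhds]
    have h0 : chi a 0 = Real.log (1 + a * 0) := by simp [chi]
    rw [h0]
    have t1 : Tendsto (fun z : ℂ => -Real.log ‖z‖) (𝓝[≠] 0) atTop :=
      tendsto_neg_atBot_atTop.comp (Real.tendsto_log_nhdsGT_zero.comp tendsto_norm_nhdsNE_zero)
    have t2 := (t1.inv_tendsto_atTop.const_mul a).const_add 1
    exact (Real.continuousAt_log (by simp)).tendsto.comp t2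
  · exact (main z hne (mem_closedBall_zero_iff.1 hz)).2.2.2.1.continuousAt.continuousWithinAt

theorem log_upper {ψ : ℂ → ℝ} {r0 : ℝ} (hr0 : 0 < r0) (hr1 : r0 ≤ 1 / 2) (h : LogEq ψ r0) {a : ℝ}
    (ha : 0 < -Real.log r0 + a) (s : ℝ) (hs : s = 1 ∨ s = -1)
    (hb : ∀ z : ℂ, ‖z‖ = r0 → s * (ψ z + chi a z) ≤ 0) :
    ∀ z : ℂ, ‖z‖ ≤ r0 → s * (ψ z + chi a z) ≤ 0 := by
  obtain ⟨hc, hm⟩ := chi_facts hr0 hr1 ha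
  have key := maxP (isCompact_closedBall (0:ℂ) r0) {0} (f := fun z => s * (ψ z + chi a z))
    (continuousOn_const.mul (h.1.add hc)) (fun z hz hz' => hb z (by
      apply le_antisymm (mem_closedBall_zero_iff.1 hz)
      by_contra hlt
      exact hz' (Metric.ball_subset_interior_closedBall (mem_ball_zero_iff.2 (not_le.1 hlt)))))
    (fun z hz hzE hpos => by
      have hzr := mem_closedBall_zero_iff.1 (interior_subset hz)
      have hz0 : z ≠ 0 := by simpa using hzE
      obtain ⟨m1, m2, m3, m4⟩ := hm z hz0 hzr
      have hzp : 0 < ‖z‖ := norm_pos_iff.2 hz0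
      refine ⟨_, ?_, ((h.2 z hz0 hzr).add m4).const_mul s⟩
      set t := Real.log ‖z‖
      have e1 : (Real.exp (2 * ψ z) - 1) * (t ^ 2)⁻¹ * (‖z‖ ^ 2)⁻¹ +
          ((t ^ 2)⁻¹ - ((a - t) ^ 2)⁻¹) * (‖z‖ ^ 2)⁻¹ =
          (Real.exp (2 * (ψ z + chi a z)) - 1) * (((a - t) ^ 2)⁻¹ * (‖z‖ ^ 2)⁻¹) := by
        have : Real.exp (2 * (ψ z + chi a z)) = Real.exp (2 * ψ z) * Real.exp (chi a z) ^ 2 := by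
          rw [← Real.exp_nat_mul, ← Real.exp_add]; congr 1; push_cast; ring
        rw [this, m3]
        have ht : t ≠ 0 := by linarith
        generalize ‖z‖ = N at *
        generalize Real.exp (2 * ψ z) = X at *
        have hat := m2.ne'
        field_simp
        ring
      rw [e1, ← mul_assoc]
      apply mul_pos _ (by positivity)
      rcases hs with rfl | rfl
      · have : 1 < Real.exp (2 * (ψ z + chi a z)) := by
          rw [Real.one_lt_exp_iff]; linarith
        linarith
      · have : Real.exp (2 * (ψ z + chi a z)) < 1 := by
          rw [Real.exp_lt_one_iff]; linarith
        linarith)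
  exact fun z hz => key z (mem_closedBall_zero_iff.2 hz)

theorem log_bound {ψ : ℂ → ℝ} {r0 : ℝ} (hr0 : 0 < r0) (hr1 : r0 ≤ 1 / 2) (h : LogEq ψ r0) :
    ∃ C, 0 ≤ C ∧ ∀ z : ℂ, z ≠ 0 → ‖z‖ ≤ r0 → |ψ z| ≤ C / (-Real.log ‖z‖) := by
  obtain ⟨K, hK⟩ := (isCompact_closedBall (0:ℂ) r0).exists_bound_of_continuousOn h.1
  have hK0 : 0 ≤ K := (norm_nonneg _).trans (hK 0 (by simp [hr0.le]))
  set L0 := -Real.log r0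
  have hL0 : 0 < L0 := by have := Real.log_neg hr0 (by linarith); simp only [L0]; linarith
  have chib : ∀ b : ℝ, ∀ z : ℂ, ‖z‖ = r0 → chi ((Real.exp b - 1) * L0) z = b := by
    intro b z hz
    rw [chi, hz, mul_assoc, mul_inv_cancel₀ hL0.ne', mul_one, add_sub_cancel, Real.log_exp]
  have hap : ∀ b : ℝ, 0 < L0 + (Real.exp b - 1) * L0 := by
    intro b; have := mul_pos (Real.exp_pos b) hL0; linarith
  have hexp1 : 1 ≤ Real.exp K := Real.one_le_exp hK0
  refine ⟨Real.exp K * L0, by positivity, fun z hz hzr => ?_⟩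
  have up := log_upper hr0 hr1 h (hap (-K)) 1 (Or.inl rfl) (fun w hw => by
    rw [chib _ w hw]
    linarith [(abs_le.1 (hK w (mem_closedBall_zero_iff.2 hw.le))).2]) z hzr
  have lo := log_upper hr0 hr1 h (hap K) (-1) (Or.inr rfl) (fun w hw => by
    rw [chib _ w hw]
    linarith [(abs_le.1 (hK w (mem_closedBall_zero_iff.2 hw.le))).1]) z hzr
  obtain ⟨m1, m2, m3, _⟩ := (chi_facts hr0 hr1 (hap (-K))).2 z hz hzr
  obtain ⟨n1, n2, n3, _⟩ := (chi_facts hr0 hr1 (hap K)).2 z hz hzr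
  set L := -Real.log ‖z‖
  have hLL : L0 ≤ L := by
    have := Real.log_le_log (norm_pos_iff.2 hz) hzr
    simp only [L, L0]; linarith
  have hLl : Real.log ‖z‖ = -L := by simp [L]
  rw [hLl, sub_neg_eq_add] at m2 m3 n2 n3
  rw [abs_le]
  constructor
  · have b1 := Real.add_one_le_exp (chi ((Real.exp K - 1) * L0) z)
    rw [n3] at b1
    have : ((Real.exp K - 1) * L0 + L) * L⁻¹ = (Real.exp K * L0) / L - L0 / L + 1 := by
      field_simp
    have h2 : 0 ≤ L0 / L := by positivity
    linarith
  · have b1 := Real.add_one_le_exp (-chi ((Real.exp (-K) - 1) * L0) z)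
    rw [Real.exp_neg (chi ((Real.exp (-K) - 1) * L0) z), m3] at b1
    set E := Real.exp (-K)
    have hE : 0 < E := Real.exp_pos _
    have hE1 : E ≤ 1 := Real.exp_le_one_iff.2 (by linarith)
    have hEK : Real.exp K = E⁻¹ := by simp [E, Real.exp_neg]
    rw [hEK]
    have k1 : E * L ≤ (E - 1) * L0 + L := by nlinarith
    have : (((E - 1) * L0 + L) * L⁻¹)⁻¹ - 1 ≤ E⁻¹ * L0 / L := by
      have e : (((E - 1) * L0 + L) * L⁻¹)⁻¹ - 1 = (1 - E) * L0 / ((E - 1) * L0 + L) := by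
        field_simp; ring
      rw [e]
      calc (1 - E) * L0 / ((E - 1) * L0 + L) ≤ 1 * L0 / (E * L) := by
            gcongr; linarith
        _ = _ := by field_simp
    linarith

theorem log_grad {ψ : ℂ → ℝ} {r0 : ℝ} (hr0 : 0 < r0) (hr1 : r0 ≤ 1 / 2) (h : LogEq ψ r0)
    {c : ℂ} (hc : ‖c‖ = 1) :
    ∃ C, 0 ≤ C ∧ ∀ z : ℂ, z ≠ 0 → ‖z‖ ≤ r0 ^ 2 →
      |fderiv ℝ ψ z c| ≤ C * (‖z‖⁻¹ * (Real.log ‖z‖)⁻¹ ^ 2) := by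
  obtain ⟨C, hC, H⟩ := log_bound hr0 hr1 h
  obtain ⟨K, hK⟩ := (isCompact_closedBall (0:ℂ) r0).exists_bound_of_continuousOn h.1
  have hK0 : 0 ≤ K := (norm_nonneg _).trans (hK 0 (by simp [hr0.le]))
  set B := Real.exp (2 * K)
  have hB : 0 < B := Real.exp_pos _
  have hlr : Real.log r0 < 0 := Real.log_neg hr0 (by linarith)
  refine ⟨16 * C + 4 * B * (C + 1), by positivity, fun z hz hzr => ?_⟩
  have hzp : 0 < ‖z‖ := norm_pos_iff.2 hz
  set L := -Real.log ‖z‖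
  have hL1 : -2 * Real.log r0 ≤ L := by
    have := Real.log_le_log hzp hzr
    rw [Real.log_pow] at this
    push_cast at this
    simp only [L]; linarith
  have hL : 0 < L := by linarith
  set c' : ℂ := c * (‖z‖ / z)
  have hc' : ‖c'‖ = 1 := by
    simp only [c', norm_mul, norm_div, hc, Complex.norm_real, norm_norm]
    field_simp
  have hre : (Complex.log z).re = -L := by simp [L, Complex.log_re]
  have hloc : ∀ ζ : ℂ, ‖ζ - Complex.log z‖ ≤ L / 2 → ζ.re ≤ -(L / 2) ∧ ‖Complex.exp ζ‖ ≤ r0 := by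
    intro ζ hζ
    have h1 := (abs_le.1 (Complex.abs_re_le_norm (ζ - Complex.log z))).2
    rw [Complex.sub_re, hre] at h1
    have h2 : ζ.re ≤ -(L / 2) := by linarith
    refine ⟨h2, ?_⟩
    rw [Complex.norm_exp, ← Real.exp_log hr0, Real.exp_le_exp]
    linarith
  have hge := GE (f := fun ζ => ψ (Complex.exp ζ)) (d := L / 4) (K := 2 * C / L)
    (M := 16 * B * (C + 1) / L ^ 3) (z0 := Complex.log z) hc' (by positivity) (by positivity) (by
      intro ζ hζ
      obtain ⟨h1, h2⟩ := hloc ζ (by linarith)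
      have hne := Complex.exp_ne_zero ζ
      have hlog : Real.log ‖Complex.exp ζ‖ = ζ.re := by rw [Complex.norm_exp, Real.log_exp]
      have b1 := H _ hne h2
      have b2 : |ψ (Complex.exp ζ)| ≤ 2 * C / L := by
        refine b1.trans ?_
        rw [hlog]
        calc C / (-ζ.re) ≤ C / (L / 2) := by gcongr; linarith
          _ = _ := by field_simp
      refine ⟨b2, ?_⟩
      have hl := (h.2 _ hne h2).comp_holo (φ := Complex.exp) analyticAt_cexp
      refine ⟨_, ?_, hl⟩
      have hnp : 0 < ‖Complex.exp ζ‖ := norm_pos_iff.2 hne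
      rw [Complex.deriv_exp, hlog]
      have e1 : ‖Complex.exp ζ‖ ^ 2 * ((Real.exp (2 * ψ (Complex.exp ζ)) - 1) * (ζ.re ^ 2)⁻¹ *
          (‖Complex.exp ζ‖ ^ 2)⁻¹) = (Real.exp (2 * ψ (Complex.exp ζ)) - 1) * (ζ.re ^ 2)⁻¹ := by
        have := hnp.ne'
        field_simp
      rw [e1, abs_mul]
      have b3 : |Real.exp (2 * ψ (Complex.exp ζ)) - 1| ≤ B * (2 * (2 * C / L)) := by
        have hk := (abs_le.1 (hK _ (mem_closedBall_zero_iff.2 h2))).2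
        have := exp_lip (a := 2 * ψ (Complex.exp ζ)) (b := 0) (B := 2 * K) (by linarith) (by linarith)
        rw [Real.exp_zero, sub_zero, abs_mul, abs_two] at this
        exact this.trans (mul_le_mul_of_nonneg_left (by linarith) hB.le)
      have b4 : |(ζ.re ^ 2)⁻¹| ≤ 4 / L ^ 2 := by
        rw [abs_of_nonneg (by positivity)]
        have : (L / 2) ^ 2 ≤ ζ.re ^ 2 := by nlinarith
        calc (ζ.re ^ 2)⁻¹ ≤ ((L / 2) ^ 2)⁻¹ := by gcongr
          _ = _ := by field_simp; norm_num
      calc _ ≤ B * (2 * (2 * C / L)) * (4 / L ^ 2) :=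
            mul_le_mul b3 b4 (abs_nonneg _) (by positivity)
        _ = 16 * B * C / L ^ 3 := by field_simp; ring
        _ ≤ _ := by gcongr; linarith)
  have hr02 : r0 ^ 2 ≤ r0 := by nlinarith
  have hder : fderiv ℝ (fun ζ => ψ (Complex.exp ζ)) (Complex.log z) c' = ‖z‖ * fderiv ℝ ψ z c := by
    have h1 := ((Complex.hasDerivAt_exp (Complex.log z)).hasFDerivAt).restrictScalars ℝ
    have h3 : HasFDerivAt ψ (fderiv ℝ ψ z) (Complex.exp (Complex.log z)) := by
      rw [Complex.exp_log hz]
      exact (cd_diff (h.2 z hz (by linarith)).1).hasFDerivAt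
    have h5 : fderiv ℝ (fun ζ => ψ (Complex.exp ζ)) (Complex.log z) = _ :=
      (h3.comp (Complex.log z) h1).fderiv
    rw [h5]
    have e : c' * z = (‖z‖ : ℝ) • c := by
      rw [Complex.real_smul]; simp only [c']; field_simp
    simp only [ContinuousLinearMap.comp_apply, ContinuousLinearMap.coe_restrictScalars',
      ContinuousLinearMap.toSpanSingleton_apply, Complex.exp_log hz, smul_eq_mul]
    rw [e, map_smul, smul_eq_mul]
  rw [hder, abs_mul, abs_of_pos hzp] at hge
  have hll : (Real.log ‖z‖)⁻¹ ^ 2 = (L ^ 2)⁻¹ := by simp [L]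
  rw [hll]
  have : |fderiv ℝ ψ z c| = ‖z‖⁻¹ * (‖z‖ * |fderiv ℝ ψ z c|) := by field_simp
  rw [this]
  calc _ ≤ ‖z‖⁻¹ * (2 * (2 * C / L) / (L / 4) + 16 * B * (C + 1) / L ^ 3 * (L / 4)) :=
        mul_le_mul_of_nonneg_left hge (by positivity)
    _ = _ := by field_simp; ring

open Complex Real Set Topology Filter Asymptotics

theorem g_tendsto {g : ℂ → ℝ} (h : HL g 0 0) (c : ℂ) :
    Tendsto (fun z => fderiv ℝ g z c) (𝓝[PDisc] 0) (𝓝 (fderiv ℝ g 0 c)) := by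
  have h1 : ContinuousAt (fderiv ℝ g) 0 := (h.1.fderiv_right (m := 1) (by norm_num)).continuousAt
  exact (h1.clm_apply continuousAt_const).tendsto.mono_left nhdsWithin_le_nhds

theorem one_isBigO_rpow {s : ℝ} (hs : s ≤ 0) :
    (fun _ : ℂ => (1:ℝ)) =O[𝓝[PDisc] 0] (fun z => ‖z‖ ^ s) := by
  refine IsBigO.of_bound 1 ?_
  filter_upwards [near0 (show (0:ℝ) < 1 by norm_num)] with z hz
  rw [Real.norm_of_nonneg (Real.rpow_nonneg (norm_nonneg _) _), norm_one, one_mul]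
  exact Real.one_le_rpow_of_pos_of_le_one_of_nonpos (norm_pos_iff.2 hz.1) hz.2 hs

theorem one_isBigO_log :
    (fun _ : ℂ => (1:ℝ)) =O[𝓝[PDisc] 0] (fun z => ‖z‖⁻¹ * (Real.log ‖z‖)⁻¹ ^ 2) := by
  refine IsBigO.of_bound 4 ?_
  filter_upwards [near0 (show (0:ℝ) < 1/2 by norm_num)] with z hz
  have hp : 0 < ‖z‖ := norm_pos_iff.2 hz.1
  have hl : Real.log ‖z‖ < 0 := Real.log_neg hp (by linarith [hz.2])
  have h := Real.abs_log_mul_self_rpow_lt ‖z‖ (1/2) hp (by linarith [hz.2]) (by norm_num)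
  have h2 : (Real.log ‖z‖ * ‖z‖ ^ (1/2:ℝ)) ^ 2 ≤ 2 ^ 2 := by
    rw [sq_le_sq, abs_of_pos (show (0:ℝ) < 2 by norm_num)]
    norm_num at h ⊢
    exact h.le
  have h3 : (‖z‖ ^ (1/2:ℝ)) ^ 2 = ‖z‖ := by
    rw [← Real.rpow_natCast, ← Real.rpow_mul hp.le]; norm_num
  rw [mul_pow, h3] at h2
  rw [norm_one, Real.norm_of_nonneg (by positivity)]
  have h4 : 0 < (Real.log ‖z‖) ^ 2 * ‖z‖ := by have := sq_pos_of_neg hl; positivity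
  have h5 : 4 * (‖z‖⁻¹ * (Real.log ‖z‖)⁻¹ ^ 2) = 4 / ((Real.log ‖z‖) ^ 2 * ‖z‖) := by
    have := hl.ne; field_simp
  rw [h5, le_div_iff₀ h4]; linarith

theorem pd_ev {u T ψ g : ℂ → ℝ} {r0 : ℝ} (hr0 : 0 < r0)
    (H : ∀ z, z ≠ 0 → ‖z‖ ≤ r0 → DifferentiableAt ℝ (fun w => u w + T w) z ∧
        ∀ c, fderiv ℝ (fun w => u w + T w) z c = fderiv ℝ ψ z c - fderiv ℝ g z c) :
    (fun z => pdx (fun w => u w + T w) z) =ᶠ[𝓝[PDisc] 0]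
      (fun z => fderiv ℝ ψ z 1 - fderiv ℝ g z 1) ∧
    (fun z => pdy (fun w => u w + T w) z) =ᶠ[𝓝[PDisc] 0]
      (fun z => fderiv ℝ ψ z Complex.I - fderiv ℝ g z Complex.I) := by
  constructor
  · filter_upwards [near0 hr0] with z hz
    obtain ⟨h1, h2⟩ := H z hz.1 hz.2
    rw [(pd_eq h1).1, h2]
  · filter_upwards [near0 hr0] with z hz
    obtain ⟨h1, h2⟩ := H z hz.1 hz.2
    rw [(pd_eq h1).2, h2]

theorem stmt1 (Ξ₀ G : ℂ → ℂ) (n : ℤ)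
    (hΞhol : DifferentiableOn ℂ Ξ₀ PDisc)
    (hGhol : DifferentiableOn ℂ G (Metric.ball (0 : ℂ) 1))
    (hG0 : G 0 ≠ 0)
    (hord : ∀ z ∈ PDisc, Ξ₀ z = z ^ n * G z)
    (u : ℂ → ℝ) (hu : ContDiffOn ℝ 2 u PDisc)
    (hpde : ∀ z ∈ PDisc, lap u z = 16 * ‖Ξ₀ z‖ ^ 2 * Real.exp (2 * u z)) :
    -- the conical case
    (∀ β : ℝ, β < (n : ℝ) + 1 →
      (∃ V : ℂ → ℝ, ContinuousOn V (Metric.ball (0 : ℂ) 1) ∧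
          ∀ z ∈ PDisc, V z = u z + β * Real.log ‖z‖) →
      ((β < (n : ℝ) + 1/2 →
          ∃ Lx Ly : ℝ,
            Tendsto (fun z => pdx (fun w => u w + β * Real.log ‖w‖) z)
              (𝓝[PDisc] 0) (𝓝 Lx) ∧
            Tendsto (fun z => pdy (fun w => u w + β * Real.log ‖w‖) z)
              (𝓝[PDisc] 0) (𝓝 Ly)) ∧
        (β = (n : ℝ) + 1/2 →
          ∃ C : ℝ, ∀ᶠ z in 𝓝[PDisc] 0,
            |pdx (fun w => u w + β * Real.log ‖w‖) z| ≤ C ∧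
            |pdy (fun w => u w + β * Real.log ‖w‖) z| ≤ C) ∧
        ((n : ℝ) + 1/2 < β →
          (fun z => pdx (fun w => u w + β * Real.log ‖w‖) z)
            =O[𝓝[PDisc] 0] (fun z => ‖z‖ ^ (1 - 2 * (β - (n : ℝ)))) ∧
          (fun z => pdy (fun w => u w + β * Real.log ‖w‖) z)
            =O[𝓝[PDisc] 0] (fun z => ‖z‖ ^ (1 - 2 * (β - (n : ℝ))))))) ∧
    -- the logarithmic case
    ((∃ V : ℂ → ℝ, ContinuousOn V (Metric.ball (0 : ℂ) 1) ∧
        ∀ z ∈ PDisc, V z = u z + ((n : ℝ) + 1) * Real.log ‖z‖ + Real.log |Real.log ‖z‖|) →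
      (fun z => pdx (fun w => u w + ((n : ℝ) + 1) * Real.log ‖w‖ + Real.log |Real.log ‖w‖|) z)
        =O[𝓝[PDisc] 0] (fun z => ‖z‖⁻¹ * (Real.log ‖z‖)⁻¹ ^ 2) ∧
      (fun z => pdy (fun w => u w + ((n : ℝ) + 1) * Real.log ‖w‖ + Real.log |Real.log ‖w‖|) z)
        =O[𝓝[PDisc] 0] (fun z => ‖z‖⁻¹ * (Real.log ‖z‖)⁻¹ ^ 2)) := by
  constructor
  · rintro β hβ ⟨V, hV, hVT⟩
    obtain ⟨r0, hr0, hr1, ψ, g, hψ, hg, H⟩ := setup Ξ₀ G n hGhol hG0 hord u hu hpde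
      (fun w => β * Real.log ‖w‖) V hV hVT
    have hT : ∀ z : ℂ, z ≠ 0 → HL (fun w => β * Real.log ‖w‖) z 0 := fun z hz => by
      simpa using (HL.log_norm hz).const_mul β
    have hcone : Cone ψ r0 (2 + 2 * n - 2 * β) := by
      refine ⟨hψ, fun z hz hzr => (H z hz hzr 0 (hT z hz)).1.of_eq ?_⟩
      have hp : 0 < ‖z‖ := norm_pos_iff.2 hz
      rw [add_zero, Real.rpow_def_of_pos hp, Real.rpow_def_of_pos hp, ← Real.exp_add,
        ← Real.exp_add]
      congr 1; ring
    obtain ⟨ex, ey⟩ := pd_ev (u := u) (T := fun w => β * Real.log ‖w‖) hr0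
      (fun z hz hzr => (H z hz hzr 0 (hT z hz)).2)
    have hg0 := hg 0 (by simpa using hr0.le)
    refine ⟨fun hb => ?_, fun hb => ?_, fun hb => ?_⟩
    · obtain ⟨L1, h1⟩ := coneA hr0 hr1 hcone (by linarith) (norm_one (α := ℂ))
      obtain ⟨L2, h2⟩ := coneA hr0 hr1 hcone (by linarith) Complex.norm_I
      exact ⟨_, _, (h1.sub (g_tendsto hg0 1)).congr' ex.symm,
        (h2.sub (g_tendsto hg0 Complex.I)).congr' ey.symm⟩
    · have e : (2 + 2 * n - 2 * β : ℝ) = 1 := by rw [hb]; ring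
      rw [e] at hcone
      obtain ⟨C1, h1⟩ := coneB hr0 hr1 hcone (norm_one (α := ℂ))
      obtain ⟨C2, h2⟩ := coneB hr0 hr1 hcone Complex.norm_I
      have g1 := (g_tendsto hg0 1).abs.eventually_le_const (lt_add_one _)
      have g2 := (g_tendsto hg0 Complex.I).abs.eventually_le_const (lt_add_one _)
      refine ⟨max (C1 + (|fderiv ℝ g 0 1| + 1)) (C2 + (|fderiv ℝ g 0 Complex.I| + 1)), ?_⟩
      filter_upwards [h1, h2, g1, g2, ex, ey] with z a1 a2 a3 a4 a5 a6
      rw [a5, a6]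
      exact ⟨((abs_sub _ _).trans (add_le_add a1 a3)).trans (le_max_left _ _),
        ((abs_sub _ _).trans (add_le_add a2 a4)).trans (le_max_right _ _)⟩
    · have e : (1 - 2 * (β - n) : ℝ) = (2 + 2 * n - 2 * β) - 1 := by ring
      rw [e]
      have h1 := coneC hr0 hr1 hcone (by linarith) (by linarith) (norm_one (α := ℂ))
      have h2 := coneC hr0 hr1 hcone (by linarith) (by linarith) Complex.norm_I
      have ho := one_isBigO_rpow (s := (2 + 2 * n - 2 * β) - 1) (by linarith)
      exact ⟨(h1.sub (((g_tendsto hg0 1).isBigO_one ℝ).trans ho)).congr' ex.symm .rfl,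
        (h2.sub (((g_tendsto hg0 Complex.I).isBigO_one ℝ).trans ho)).congr' ey.symm .rfl⟩
  · rintro ⟨V, hV, hVT⟩
    simp only [add_assoc (u _)] at hVT ⊢
    obtain ⟨r0, hr0, hr1, ψ, g, hψ, hg, H⟩ := setup Ξ₀ G n hGhol hG0 hord u hu hpde
      (fun w => ((n : ℝ) + 1) * Real.log ‖w‖ + Real.log |Real.log ‖w‖|) V hV hVT
    have hlg : ∀ z : ℂ, z ≠ 0 → ‖z‖ ≤ r0 → Real.log ‖z‖ < 0 := fun z hz hzr =>
      Real.log_neg (norm_pos_iff.2 hz) (by linarith)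
    have hT : ∀ z : ℂ, z ≠ 0 → ‖z‖ ≤ r0 →
        HL (fun w => ((n : ℝ) + 1) * Real.log ‖w‖ + Real.log |Real.log ‖w‖|) z
          (-(((Real.log ‖z‖) ^ 2)⁻¹ * (‖z‖ ^ 2)⁻¹)) := fun z hz hzr => by
      have a1 := (HL.log_norm hz).const_mul ((n : ℝ) + 1)
      have a2 := HL.log_sub_log hz (a := 0) (by have := hlg z hz hzr; linarith)
      simpa using a1.add a2
    have hcone : LogEq ψ r0 := by
      refine ⟨hψ, fun z hz hzr => (H z hz hzr _ (hT z hz hzr)).1.of_eq ?_⟩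
      have hp : 0 < ‖z‖ := norm_pos_iff.2 hz
      have hl := hlg z hz hzr
      have hl0 : 0 < |Real.log ‖z‖| := abs_pos.2 hl.ne
      have e1 : ((Real.log ‖z‖) ^ 2)⁻¹ = Real.exp (-2 * Real.log |Real.log ‖z‖|) := by
        rw [← sq_abs, ← Real.rpow_natCast, ← Real.rpow_neg hl0.le, Real.rpow_def_of_pos hl0]
        congr 1; push_cast; ring
      have e2 : (‖z‖ ^ 2)⁻¹ = Real.exp (-2 * Real.log ‖z‖) := by
        rw [← Real.rpow_natCast, ← Real.rpow_neg hp.le, Real.rpow_def_of_pos hp]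
        congr 1; push_cast; ring
      have e3 : Real.exp (2 * ψ z - 2 * (((n : ℝ) + 1) * Real.log ‖z‖ +
          Real.log |Real.log ‖z‖|)) * ‖z‖ ^ (2 * n : ℝ) =
          Real.exp (2 * ψ z) * ((Real.log ‖z‖) ^ 2)⁻¹ * (‖z‖ ^ 2)⁻¹ := by
        rw [e1, e2, Real.rpow_def_of_pos hp, ← Real.exp_add, ← Real.exp_add, ← Real.exp_add]
        congr 1; ring
      rw [e3]; ring
    obtain ⟨ex, ey⟩ := pd_ev (u := u)
      (T := fun w => ((n : ℝ) + 1) * Real.log ‖w‖ + Real.log |Real.log ‖w‖|) hr0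
      (fun z hz hzr => (H z hz hzr _ (hT z hz hzr)).2)
    have hg0 := hg 0 (by simpa using hr0.le)
    have key : ∀ c : ℂ, ‖c‖ = 1 → (fun z => fderiv ℝ ψ z c) =O[𝓝[PDisc] 0]
        (fun z => ‖z‖⁻¹ * (Real.log ‖z‖)⁻¹ ^ 2) := fun c hc => by
      obtain ⟨C, hC, h1⟩ := log_grad hr0 hr1 hcone hc
      refine IsBigO.of_bound C ?_
      filter_upwards [near0 (show 0 < r0 ^ 2 by positivity)] with z hz
      rw [Real.norm_of_nonneg (show 0 ≤ ‖z‖⁻¹ * (Real.log ‖z‖)⁻¹ ^ 2 by positivity)]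
      exact h1 z hz.1 hz.2
    exact ⟨((key 1 norm_one).sub (((g_tendsto hg0 1).isBigO_one ℝ).trans
        one_isBigO_log)).congr' ex.symm .rfl,
      ((key Complex.I Complex.norm_I).sub (((g_tendsto hg0 Complex.I).isBigO_one ℝ).trans
        one_isBigO_log)).congr' ey.symm .rfl⟩
end

section
/- Let k ∈ ℤ, k ≠ 0. Define on the punctured unit disc B₁* the functions h(z) = Re(z^k)/k and u(z) = −k·log|z| − log(−log|z|). Then h is harmonic (Δh = 0), the squared gradient satisfies (∂h/∂x)² + (∂h/∂y)² = |z|^{2(k−1)}, and u satisfies Δu(z) = ((∂h/∂x)² + (∂h/∂y)²)·e^{2u(z)} = 1/(|z|²(log|z|)²) on B₁*. -/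
open Complex Real Set

/-- `h(z) = Re(z^k)/k`. -/
noncomputable def hFun (k : ℤ) (z : ℂ) : ℝ := (z ^ k).re / (k : ℝ)

/-- `u(z) = -k log|z| - log(-log|z|)`. -/
noncomputable def uFun (k : ℤ) (z : ℂ) : ℝ :=
  -(k : ℝ) * Real.log ‖z‖ - Real.log (-Real.log ‖z‖)

open Topology Filter in
lemma ev_disc (v z : ℂ) (hz : z ∈ PDisc) : ∀ᶠ t : ℝ in 𝓝 0, z + t * v ∈ PDisc := by
  have ho : IsOpen PDisc := by
    apply IsOpen.inter
    · exact isOpen_lt continuous_const continuous_norm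
    · exact isOpen_lt continuous_norm continuous_const
  have hc : Continuous (fun t : ℝ => z + t * v) := by fun_prop
  apply hc.continuousAt.eventually_mem
  apply ho.mem_nhds
  simpa using hz

lemma deriv_ev (v z : ℂ) (hz : z ∈ PDisc) (f g : ℂ → ℝ) (h : ∀ w ∈ PDisc, f w = g w) :
    deriv (fun t : ℝ => f (z + t * v)) 0 = deriv (fun t : ℝ => g (z + t * v)) 0 := by
  apply Filter.EventuallyEq.deriv_eq
  filter_upwards [ev_disc v z hz] with t ht using h _ ht

lemma line_deriv (v z : ℂ) : HasDerivAt (fun t : ℝ => z + t * v) v 0 := by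
  have h := ((Complex.ofRealCLM.hasDerivAt (x := (0:ℝ))).mul_const v).const_add z
  simpa using h

lemma zpow_deriv (m : ℤ) (c v z : ℂ) (hz : z ≠ 0) :
    HasDerivAt (fun t : ℝ => (c * (z + t * v) ^ m).re) (c * (m * z ^ (m - 1) * v)).re 0 := by
  have h1 : HasDerivAt (fun w : ℂ => w ^ m) (m * z ^ (m - 1)) (z + ((0:ℝ):ℂ) * v) := by
    have := hasDerivAt_zpow m z (Or.inl hz)
    simpa using this
  have h2 := ((h1.comp (0:ℝ) (line_deriv v z)).const_mul c)
  exact Complex.reCLM.hasFDerivAt.comp_hasDerivAt (0:ℝ) h2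

lemma disc_ne {z : ℂ} (hz : z ∈ PDisc) : z ≠ 0 := norm_pos_iff.mp hz.1

lemma h_v (k : ℤ) (hk : k ≠ 0) (v z : ℂ) (hz : z ∈ PDisc) :
    deriv (fun t : ℝ => hFun k (z + t * v)) 0 = (v * z ^ (k - 1)).re := by
  have h := (zpow_deriv k 1 v z (disc_ne hz)).div_const (k : ℝ)
  have hk' : (k : ℝ) ≠ 0 := by exact_mod_cast hk
  simp only [one_mul] at h
  unfold hFun
  rw [h.deriv, div_eq_iff hk', mul_comm _ (k : ℝ), ← Complex.re_ofReal_mul]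
  congr 1
  push_cast
  ring

lemma h_vv (k : ℤ) (v z : ℂ) (hz : z ∈ PDisc) :
    deriv (fun t : ℝ => (v * (z + t * v) ^ (k - 1)).re) 0
      = (v * v * (((k - 1 : ℤ) : ℂ) * z ^ (k - 1 - 1))).re := by
  rw [(zpow_deriv (k - 1) v v z (disc_ne hz)).deriv]
  congr 1
  ring

/-- real inner product -/
noncomputable def pp (v z : ℂ) : ℝ := z.re * v.re + z.im * v.im

lemma normSq_deriv (v z : ℂ) :
    HasDerivAt (fun t : ℝ => Complex.normSq (z + t * v)) (2 * pp v z) 0 := by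
  have h1 : HasDerivAt (fun t : ℝ => z.re + t * v.re) (v.re) 0 := by
    simpa using ((hasDerivAt_id (0:ℝ)).mul_const v.re).const_add z.re
  have h2 : HasDerivAt (fun t : ℝ => z.im + t * v.im) (v.im) 0 := by
    simpa using ((hasDerivAt_id (0:ℝ)).mul_const v.im).const_add z.im
  have h := (h1.mul h1).add (h2.mul h2)
  refine (h.congr_of_eventuallyEq (Filter.Eventually.of_forall fun t => ?_)).congr_deriv ?_
  · simp [Complex.normSq_apply]
  · simp [pp]; ring

lemma pp_deriv (v z : ℂ) :
    HasDerivAt (fun t : ℝ => pp v (z + t * v)) (Complex.normSq v) 0 := by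
  have h1 : HasDerivAt (fun t : ℝ => z.re + t * v.re) (v.re) 0 := by
    simpa using ((hasDerivAt_id (0:ℝ)).mul_const v.re).const_add z.re
  have h2 : HasDerivAt (fun t : ℝ => z.im + t * v.im) (v.im) 0 := by
    simpa using ((hasDerivAt_id (0:ℝ)).mul_const v.im).const_add z.im
  have h := (h1.mul_const v.re).add (h2.mul_const v.im)
  refine (h.congr_of_eventuallyEq (Filter.Eventually.of_forall fun t => ?_)).congr_deriv ?_
  · simp [pp]
  · simp [Complex.normSq_apply]

lemma log_deriv (v z : ℂ) (hz : z ≠ 0) :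
    HasDerivAt (fun t : ℝ => Real.log ‖z + t * v‖) (pp v z / Complex.normSq z) 0 := by
  have hn : Complex.normSq z ≠ 0 := by simpa using hz
  have h := ((normSq_deriv v z).log (by simpa using hz)).div_const 2
  refine (h.congr_of_eventuallyEq (Filter.Eventually.of_forall fun t => ?_)).congr_deriv ?_
  · beta_reduce
    rw [Complex.normSq_eq_norm_sq, Real.log_pow]
    push_cast; ring
  · simp; field_simp

lemma disc_log {z : ℂ} (hz : z ∈ PDisc) : Real.log ‖z‖ < 0 := Real.log_neg hz.1 hz.2

lemma u_v (k : ℤ) (v z : ℂ) (hz : z ∈ PDisc) :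
    deriv (fun t : ℝ => uFun k (z + t * v)) 0
      = -(pp v z / Complex.normSq z) * (k + (Real.log ‖z‖)⁻¹) := by
  have hl := log_deriv v z (disc_ne hz)
  have hL := (disc_log hz).ne
  have h := (hl.const_mul (-(k:ℝ))).sub (hl.neg.log (by simpa using hL))
  unfold uFun
  refine h.deriv.trans ?_
  simp only [Pi.neg_apply, Complex.ofReal_zero, zero_mul, add_zero]
  field_simp
  ring

lemma u_vv (k : ℤ) (v z : ℂ) (hz : z ∈ PDisc) :
    deriv (fun t : ℝ => -(pp v (z + t * v) / Complex.normSq (z + t * v))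
        * (k + (Real.log ‖z + t * v‖)⁻¹)) 0
      = -(Complex.normSq v / Complex.normSq z - 2 * (pp v z / Complex.normSq z) ^ 2)
          * (k + (Real.log ‖z‖)⁻¹)
        + (pp v z / Complex.normSq z) ^ 2 / (Real.log ‖z‖) ^ 2 := by
  have hn : Complex.normSq z ≠ 0 := by simpa using disc_ne hz
  have hl := log_deriv v z (disc_ne hz)
  have hL := (disc_log hz).ne
  have h := (((pp_deriv v z).div (normSq_deriv v z) (by simpa using disc_ne hz)).neg).mul
    ((hl.inv (by simpa using hL)).const_add (k:ℝ))
  refine h.deriv.trans ?_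
  simp only [Pi.neg_apply, Pi.div_apply, Pi.inv_apply, Complex.ofReal_zero, zero_mul, add_zero]
  field_simp

lemma pdx_eq (f : ℂ → ℝ) (z : ℂ) : pdx f z = deriv (fun t : ℝ => f (z + t * 1)) 0 := by
  simp [pdx]

theorem stmt3 (k : ℤ) (hk : k ≠ 0) :
    ∀ z ∈ PDisc,
      lap (hFun k) z = 0 ∧
      (pdx (hFun k) z) ^ 2 + (pdy (hFun k) z) ^ 2 = ‖z‖ ^ (2 * (k - 1)) ∧
      lap (uFun k) z
        = ((pdx (hFun k) z) ^ 2 + (pdy (hFun k) z) ^ 2) * Real.exp (2 * uFun k z) ∧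
      lap (uFun k) z = 1 / (‖z‖ ^ 2 * (Real.log ‖z‖) ^ 2) := by
  intro z hz
  have hx : ∀ w ∈ PDisc, pdx (hFun k) w = (1 * w ^ (k - 1)).re := fun w hw => by
    rw [pdx_eq]; exact h_v k hk 1 w hw
  have hy : ∀ w ∈ PDisc, pdy (hFun k) w = (Complex.I * w ^ (k - 1)).re :=
    fun w hw => h_v k hk _ w hw
  have hr := hz.1
  have hL := (disc_log hz).ne
  have hgrad : (pdx (hFun k) z) ^ 2 + (pdy (hFun k) z) ^ 2 = ‖z‖ ^ (2 * (k - 1)) := by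
    rw [hx z hz, hy z hz, mul_comm 2 (k - 1), zpow_mul, ← norm_zpow, zpow_ofNat,
      ← Complex.normSq_eq_norm_sq, Complex.normSq_apply]
    simp; ring
  have hlapu : lap (uFun k) z = 1 / (‖z‖ ^ 2 * (Real.log ‖z‖) ^ 2) := by
    have e1 := (pdx_eq (pdx (uFun k)) z).trans
      ((deriv_ev 1 z hz _ _ (fun w hw => (pdx_eq (uFun k) w).trans (u_v k 1 w hw))).trans
        (u_vv k 1 z hz))
    have e2 : pdy (pdy (uFun k)) z = _ :=
      (deriv_ev Complex.I z hz _ _ (fun w hw => u_v k Complex.I w hw)).trans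
        (u_vv k Complex.I z hz)
    have hn : Complex.normSq z ≠ 0 := by simpa using disc_ne hz
    have hp : pp 1 z ^ 2 + pp Complex.I z ^ 2 = Complex.normSq z := by
      simp [pp, Complex.normSq_apply]; ring
    unfold lap
    rw [e1, e2, ← Complex.normSq_eq_norm_sq]
    simp only [map_one, Complex.normSq_I]
    have hp' : pp 1 z ^ 2 = Complex.normSq z - pp Complex.I z ^ 2 := by linarith
    rw [div_pow, div_pow, hp']
    field_simp
    ring
  refine ⟨?_, hgrad, ?_, hlapu⟩
  · unfold lap
    rw [pdx_eq, deriv_ev 1 z hz _ _ hx, h_vv k 1 z hz]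
    rw [show pdy (pdy (hFun k)) z = _ from
      (deriv_ev Complex.I z hz _ _ hy).trans (h_vv k _ z hz), ← Complex.add_re]
    simp
  · rw [hgrad, hlapu]
    have he : Real.exp (2 * uFun k z) = ‖z‖ ^ (-(2 * k)) * ((Real.log ‖z‖) ^ 2)⁻¹ := by
      have h1 : Real.log (‖z‖ ^ (-(2 * k)) * ((Real.log ‖z‖) ^ 2)⁻¹) = 2 * uFun k z := by
        rw [Real.log_mul (zpow_ne_zero _ hr.ne') (by positivity), Real.log_zpow, Real.log_inv,
          Real.log_pow, uFun, Real.log_neg_eq_log]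
        push_cast; ring
      rw [← h1, Real.exp_log]
      positivity
    rw [he, ← mul_assoc, ← zpow_add₀ hr.ne', show 2 * (k - 1) + -(2 * k) = -2 by ring,
      zpow_neg, one_div, mul_inv]
    rfl
end
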